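/- arXiv:2108.00717 — 3 statements merged into one kernel-verified Lean document; each statement's English description precedes it below -/
import Mathlib

section
/- Let g ≥ 2 and let Y be an at-most two-dimensional CW-complex with an assignment of both a direction and a label in {a_1, b_1, …, a_g, b_g} to each edge. Then Y is a tiled surface (i.e., Y embeds as a subcomplex of a covering space of Σ_g compatibly with labels and directions) if and only if Y satisfies: (P1) every vertex of Y has at most one incoming ℓ-labeled edge and at most one outgoing ℓ-labeled edge for each label ℓ ∈ {a_1, b_1, …, a_g, b_g}; (P2) every path in the 1-skeleton Y^(1) reading a word in {a_1^{±1}, …, b_g^{±1}} which equals the identity in Γ_g is closed; (P3) every 2-cell of Y is a 4g-gon glued along a closed path reading the relation [a_1,b_1]⋯[a_g,b_g], and every such closed path is the boundary of at most one 2-cell. -/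
/-!
Formalization preamble for "Core Surfaces" (Magee–Puder).

We work with a fixed combinatorial (CW) model.  The surface `Σ_g` has one vertex,
`2g` directed labeled edges (the label `2i` plays the role of `a_{i+1}` and `2i+1`
the role of `b_{i+1}`), and one `4g`-gon glued along `[a₁,b₁]⋯[a_g,b_g]`.

* `Gamma g` is the surface group, presented by the single relator.
* A `Complex g` is a combinatorial 2-complex with directed, labeled edges and
  2-cells given by their boundary walks; coverings of `Σ_g` are the complexes in
  which every vertex has exactly one incoming/outgoing edge of each label, every
  walk reading the relator is closed, and every closed walk reading the relator
  bounds exactly one face (`IsCovering`).  A tiled surface is a complex that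
  embeds into such a covering (`IsTiledSurface`).
* Blocks, chains, boundary cycles (via the ribbon structure coming from the fixed
  cyclic order of the `4g` half-edges around a vertex of `Σ_g`), boundary-reduced
  and strongly boundary-reduced surfaces are defined combinatorially.
* Homotopy of edge-walks is the edge-path-group homotopy: backtrack insertions and
  insertions of boundaries of (present) faces.
* `cover g J` is the covering space `J\~Σ_g` of `Σ_g` associated to a subgroup
  `J ≤ Γ_g` (vertices = right cosets), and `coreSub g J` is the core surface of
  `J`, defined exactly as in the paper: the union of all shortest representative
  cycles of essential free-homotopy classes, together with all components of the
  complement containing finitely many `4g`-gons.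
-/

noncomputable section

namespace CS

/-- Signed letters over the generators `a₁,b₁,…,a_g,b_g` of `Γ_g`
(`a_{i+1} ↦ 2i`, `b_{i+1} ↦ 2i+1`); `true` means a positive letter. -/
abbrev Letter (g : ℕ) := Fin (2 * g) × Bool

/-- The label of the `p`-th letter of the relator `[a₁,b₁][a₂,b₂]⋯[a_g,b_g]`. -/
def relLabel (g : ℕ) (p : Fin (4 * g)) : Fin (2 * g) :=
  ⟨2 * ((p : ℕ) / 4) + ((p : ℕ) % 4) % 2, by have := p.2; omega⟩

/-- The sign of the `p`-th letter of the relator. -/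
def relSign (g : ℕ) (p : Fin (4 * g)) : Bool := decide ((p : ℕ) % 4 < 2)

/-- The relator `[a₁,b₁][a₂,b₂]⋯[a_g,b_g]` as a word (list of signed letters). -/
def relatorWord (g : ℕ) : List (Letter g) :=
  (List.finRange (4 * g)).map fun p => (relLabel g p, relSign g p)

/-- The relator as an element of the free group on the `2g` generators. -/
def relatorF (g : ℕ) : FreeGroup (Fin (2 * g)) :=
  ((relatorWord g).map fun l => if l.2 then FreeGroup.of l.1 else (FreeGroup.of l.1)⁻¹).prod

/-- The surface group `Γ_g = ⟨a₁,b₁,…,a_g,b_g ∣ [a₁,b₁]⋯[a_g,b_g]⟩`. -/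
abbrev Gamma (g : ℕ) := PresentedGroup ({relatorF g} : Set (FreeGroup (Fin (2 * g))))

/-- The image of a signed letter in `Γ_g`. -/
def letterG {g : ℕ} (l : Letter g) : Gamma g :=
  if l.2 then PresentedGroup.of l.1 else (PresentedGroup.of l.1)⁻¹

/-- The image of a word in `Γ_g`. -/
def wordG {g : ℕ} (w : List (Letter g)) : Gamma g := (w.map letterG).prod

/-- `ℓ(γ^{Γ_g})`: the minimal length of a word in the generators representing the
conjugacy class of `γ` in `Γ_g`. -/
def conjLen {g : ℕ} (γ : Gamma g) : ℕ :=
  sInf {n | ∃ w : List (Letter g), w.length = n ∧ ∃ x : Gamma g, x * wordG w * x⁻¹ = γ}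

/-! ### Half-edge positions around a vertex of `Σ_g`

The `4g` half-edges around the vertex `o` of `Σ_g` come in the (clockwise) cyclic
order `a₁`-out, `b₁`-in, `a₁`-in, `b₁`-out, `a₂`-out, `b₂`-in, `a₂`-in, `b₂`-out, …
-/

/-- Position of the outgoing `ℓ`-labeled half-edge in the cyclic order. -/
def posOut {g : ℕ} (ℓ : Fin (2 * g)) : ℕ :=
  if (ℓ : ℕ) % 2 = 0 then 2 * (ℓ : ℕ) else 2 * (ℓ : ℕ) + 1

/-- Position of the incoming `ℓ`-labeled half-edge in the cyclic order. -/
def posIn {g : ℕ} (ℓ : Fin (2 * g)) : ℕ :=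
  if (ℓ : ℕ) % 2 = 0 then 2 * (ℓ : ℕ) + 2 else 2 * (ℓ : ℕ) - 1

/-- The position of the half-edge through which a traversal of a dart with signed
letter `s` *arrives* at its terminal vertex. -/
def posArr {g : ℕ} (s : Letter g) : ℕ := if s.2 then posIn s.1 else posOut s.1

/-- The position of the half-edge through which a traversal of a dart with signed
letter `s` *leaves* its initial vertex. -/
def posLv {g : ℕ} (s : Letter g) : ℕ := if s.2 then posOut s.1 else posIn s.1

/-- The number of half-edges strictly between the arrival half-edge of `s` and the
departure half-edge of `t`, in the clockwise cyclic order of the `4g` half-edges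
around a vertex. -/
def gapN {g : ℕ} (s t : Letter g) : ℕ := (posLv t + 4 * g - (posArr s + 1)) % (4 * g)

/-! ### Combinatorial complexes -/

/-- A combinatorial at-most-2-dimensional CW-complex with directed edges labeled by
the generators of `Γ_g`, and 2-cells recorded by their boundary walks (lists of
darts, i.e. edges with a direction of traversal). -/
structure Complex (g : ℕ) where
  V : Type
  E : Type
  F : Type
  src : E → V
  dst : E → V
  lab : E → Fin (2 * g)
  bdry : F → List (E × Bool)

namespace Complex

variable {g : ℕ} (Y : Complex g)

/-- Darts: edges together with a direction of traversal (`true` = forward). -/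
abbrev D := Y.E × Bool

/-- The initial vertex of a dart. -/
def dTail (d : Y.D) : Y.V := if d.2 then Y.src d.1 else Y.dst d.1

/-- The terminal vertex of a dart. -/
def dHead (d : Y.D) : Y.V := if d.2 then Y.dst d.1 else Y.src d.1

/-- The reversal of a dart. -/
def dRev (d : Y.D) : Y.D := (d.1, !d.2)

/-- The signed letter read by a dart. -/
def dLet (d : Y.D) : Letter g := (Y.lab d.1, d.2)

/-- The word read along a list of darts. -/
def wordOf (l : List Y.D) : List (Letter g) := l.map Y.dLet

/-- The reversed walk. -/
def revW (l : List Y.D) : List Y.D := (l.map Y.dRev).reverse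

/-- `WalkFrom u v l` : `l` is a walk (edge-path) from `u` to `v`. -/
inductive WalkFrom : Y.V → Y.V → List Y.D → Prop
  | nil (v : Y.V) : WalkFrom v v []
  | cons (d : Y.D) {v : Y.V} {l : List Y.D} :
      WalkFrom (Y.dHead d) v l → WalkFrom (Y.dTail d) v (d :: l)

/-- All darts of `l` use edges from the set `sE`. -/
def InSet (sE : Set Y.E) (l : List Y.D) : Prop := ∀ d ∈ l, d.1 ∈ sE

/-- Two darts are adjacent (can be traversed consecutively). -/
def adj (d d' : Y.D) : Prop := Y.dHead d = Y.dTail d'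

/-- A nonempty closed walk. -/
def IsCycle (c : List Y.D) : Prop := c ≠ [] ∧ ∃ v, Y.WalkFrom v v c

/-- **P1**: at most one incoming and at most one outgoing `ℓ`-labeled edge at every
vertex, for every label `ℓ`. -/
def P1 : Prop :=
  (∀ e e' : Y.E, Y.src e = Y.src e' → Y.lab e = Y.lab e' → e = e') ∧
  (∀ e e' : Y.E, Y.dst e = Y.dst e' → Y.lab e = Y.lab e' → e = e')

/-- **P2**: every walk reading a word equal to `1` in `Γ_g` is closed. -/
def P2 : Prop :=
  ∀ (u v : Y.V) (l : List Y.D), Y.WalkFrom u v l → wordG (Y.wordOf l) = 1 → u = v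

/-- **P3**: every 2-cell is glued along a closed walk reading the relator
`[a₁,b₁]⋯[a_g,b_g]`, and every such closed walk bounds at most one 2-cell. -/
def P3 : Prop :=
  (∀ f : Y.F, (∃ v, Y.WalkFrom v v (Y.bdry f)) ∧ Y.wordOf (Y.bdry f) = relatorWord g) ∧
  Function.Injective Y.bdry

/-- A combinatorial covering space of `Σ_g`: every vertex has exactly one outgoing
and one incoming edge of each label, every walk reading the relator is closed, and
every closed walk reading the relator bounds exactly one `4g`-gon. -/
def IsCovering : Prop :=
  Y.P1 ∧ Y.P3 ∧
  (∀ (v : Y.V) (ℓ : Fin (2 * g)), ∃ e, Y.src e = v ∧ Y.lab e = ℓ) ∧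
  (∀ (v : Y.V) (ℓ : Fin (2 * g)), ∃ e, Y.dst e = v ∧ Y.lab e = ℓ) ∧
  (∀ (u v : Y.V) (l : List Y.D), Y.WalkFrom u v l → Y.wordOf l = relatorWord g → u = v) ∧
  (∀ (v : Y.V) (l : List Y.D), Y.WalkFrom v v l → Y.wordOf l = relatorWord g →
    ∃ f, Y.bdry f = l)

end Complex

/-- A morphism of labeled complexes: maps cells to cells of the same dimension and
respects sources, targets, labels and face boundaries (equivalently, commutes with
the immersions to `Σ_g`). -/
structure Hom {g : ℕ} (Y Z : Complex g) where
  mV : Y.V → Z.V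
  mE : Y.E → Z.E
  mF : Y.F → Z.F
  hsrc : ∀ e, Z.src (mE e) = mV (Y.src e)
  hdst : ∀ e, Z.dst (mE e) = mV (Y.dst e)
  hlab : ∀ e, Z.lab (mE e) = Y.lab e
  hbdry : ∀ f, Z.bdry (mF f) = (Y.bdry f).map fun d => (mE d.1, d.2)

namespace Hom

variable {g : ℕ} {Y Z : Complex g}

/-- The induced map on darts. -/
def mD (φ : Hom Y Z) (d : Y.D) : Z.D := (φ.mE d.1, d.2)

/-- Injectivity (an embedding of complexes). -/
def Inj (φ : Hom Y Z) : Prop :=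
  Function.Injective φ.mV ∧ Function.Injective φ.mE ∧ Function.Injective φ.mF

end Hom

namespace Complex

variable {g : ℕ} (Y : Complex g)

/-- A tiled surface: a complex which embeds into a combinatorial covering space of
`Σ_g` (compatibly with directions and labels). -/
def IsTiledSurface : Prop :=
  ∃ Z : Complex g, Z.IsCovering ∧ ∃ φ : Hom Y Z, φ.Inj

/-- Connectivity of a complex (any two vertices are joined by a walk). -/
def Connected : Prop := Nonempty Y.V ∧ ∀ v w : Y.V, ∃ l, Y.WalkFrom v w l

/-! ### Blocks and chains -/

/-- A block: a nonempty walk such that successive darts have no half-edges between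
them (hence it reads a subword of the cyclic relator, of length at most `4g`). -/
def IsBlock (l : List Y.D) : Prop :=
  l ≠ [] ∧ l.length ≤ 4 * g ∧
  List.Chain' (fun d d' => Y.adj d d' ∧ gapN (Y.dLet d) (Y.dLet d') = 0) l

/-- Two blocks are consecutive: concatenation is a walk and there is exactly one
half-edge between the last dart of the first and the first dart of the second. -/
def chainStep (b b' : List Y.D) : Prop :=
  ∃ d d', b.getLast? = some d ∧ b'.head? = some d' ∧ Y.adj d d' ∧
    gapN (Y.dLet d) (Y.dLet d') = 1

/-- A chain: a nonempty sequence of consecutive blocks. -/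
def IsChain (bs : List (List Y.D)) : Prop :=
  bs ≠ [] ∧ (∀ b ∈ bs, Y.IsBlock b) ∧ List.Chain' Y.chainStep bs

/-- A cyclic chain: a chain whose blocks pave an entire cycle. -/
def IsCyclicChain (bs : List (List Y.D)) : Prop :=
  Y.IsChain bs ∧ ∃ b b', bs.getLast? = some b ∧ bs.head? = some b' ∧ Y.chainStep b b'

/-- A long chain: a chain of consecutive blocks of lengths `2g, 2g−1, …, 2g−1, 2g`. -/
def IsLongChain (bs : List (List Y.D)) : Prop :=
  Y.IsChain bs ∧ ∃ k, bs.map List.length = 2 * g :: (List.replicate k (2 * g - 1) ++ [2 * g])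

/-- A half-chain: a cyclic chain all of whose blocks have length `2g − 1`. -/
def IsHalfChain (bs : List (List Y.D)) : Prop :=
  Y.IsCyclicChain bs ∧ ∀ b ∈ bs, b.length = 2 * g - 1

/-! ### Boundary cycles of the thick version (relative to sets of present edges and
faces), via the ribbon structure -/

/-- `nextD sE d d'`: among darts (with edge in `sE`) leaving the head of `d`, the
dart `d'` is the first one in clockwise order after the arrival half-edge of `d`.
This is the successor map whose orbits trace the boundary components of the thick
version of the ribbon graph. -/
def nextD (sE : Set Y.E) (d d' : Y.D) : Prop :=
  d'.1 ∈ sE ∧ Y.adj d d' ∧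
  ∀ d'' : Y.D, d''.1 ∈ sE → Y.adj d d'' →
    gapN (Y.dLet d) (Y.dLet d') ≤ gapN (Y.dLet d) (Y.dLet d'')

/-- The corner between the consecutive darts `d, d'` is filled by a face from `sF`. -/
def faceStep (sF : Set Y.F) (d d' : Y.D) : Prop :=
  ∃ f ∈ sF, [d, d'] <:+: (Y.bdry f ++ Y.bdry f)

/-- One step along the boundary of the thick version. -/
def bStep (sE : Set Y.E) (sF : Set Y.F) (d d' : Y.D) : Prop :=
  d.1 ∈ sE ∧ Y.nextD sE d d' ∧ ¬ Y.faceStep sF d d'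

/-- A (finite segment of a) boundary cycle of the thick version. -/
def BPath (sE : Set Y.E) (sF : Set Y.F) (l : List Y.D) : Prop :=
  l ≠ [] ∧ Y.InSet sE l ∧ List.Chain' (Y.bStep sE sF) l

/-- A (finite) boundary cycle of the thick version. -/
def BCycle (sE : Set Y.E) (sF : Set Y.F) (l : List Y.D) : Prop :=
  Y.BPath sE sF l ∧ ∃ d d', l.getLast? = some d ∧ l.head? = some d' ∧ Y.bStep sE sF d d'

/-- A dart lying on the boundary of the thick version. -/
def IsBDart (sE : Set Y.E) (sF : Set Y.F) (d : Y.D) : Prop :=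
  d.1 ∈ sE ∧ ∃ d', Y.nextD sE d d' ∧ ¬ Y.faceStep sF d d'

/-- Boundary reduced: no boundary cycle contains a long block (length `≥ 2g+1`) or
a long chain. -/
def BoundaryReduced (sE : Set Y.E) (sF : Set Y.F) : Prop :=
  (∀ l, Y.BPath sE sF l → ¬ (Y.IsBlock l ∧ 2 * g + 1 ≤ l.length)) ∧
  (∀ bs, Y.IsLongChain bs → ¬ Y.BPath sE sF bs.flatten)

/-- Strongly boundary reduced: no boundary cycle contains a half-block (length
exactly `2g`) or a half-chain. -/
def StronglyBoundaryReduced (sE : Set Y.E) (sF : Set Y.F) : Prop :=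
  (∀ l, Y.BPath sE sF l → ¬ (Y.IsBlock l ∧ l.length = 2 * g)) ∧
  (∀ bs, Y.IsHalfChain bs → ¬ Y.BCycle sE sF bs.flatten)

/-! ### Combinatorial homotopy of walks -/

/-- A closed walk traversing the boundary of a face from `sF` (in either direction,
starting anywhere). -/
def faceLoop (sF : Set Y.F) (b : List Y.D) : Prop :=
  ∃ f ∈ sF, ∃ n, b = (Y.bdry f).rotate n ∨ b = Y.revW ((Y.bdry f).rotate n)

/-- Elementary homotopy move: insertion of a backtrack or of a face boundary. -/
def elemMove (sE : Set Y.E) (sF : Set Y.F) (l l' : List Y.D) : Prop :=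
  (∃ (l₁ l₂ : List Y.D) (d : Y.D), d.1 ∈ sE ∧ l = l₁ ++ l₂ ∧ l' = l₁ ++ d :: Y.dRev d :: l₂) ∨
  (∃ l₁ l₂ b, Y.faceLoop sF b ∧ l = l₁ ++ l₂ ∧ l' = l₁ ++ b ++ l₂)

/-- Homotopy (rel endpoints) of walks from `u` to `v`, inside the subcomplex with
edge set `sE` and face set `sF`. -/
def Homotopic (sE : Set Y.E) (sF : Set Y.F) (u v : Y.V) (c c' : List Y.D) : Prop :=
  Relation.EqvGen
    (fun a b =>
      Y.WalkFrom u v a ∧ Y.WalkFrom u v b ∧ Y.InSet sE a ∧ Y.InSet sE b ∧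
        (Y.elemMove sE sF a b ∨ Y.elemMove sE sF b a)) c c'

/-- A closed walk which is null-homotopic. -/
def NullHomotopic (sE : Set Y.E) (sF : Set Y.F) (c : List Y.D) : Prop :=
  ∃ v, Y.WalkFrom v v c ∧ Y.Homotopic sE sF v v c []

/-- An essential cycle: a nonempty closed walk which is not null-homotopic. -/
def Essential (sE : Set Y.E) (sF : Set Y.F) (c : List Y.D) : Prop :=
  Y.IsCycle c ∧ Y.InSet sE c ∧ ¬ Y.NullHomotopic sE sF c

/-- Free homotopy of closed walks. -/
def FreelyHomotopic (sE : Set Y.E) (sF : Set Y.F) (c c' : List Y.D) : Prop :=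
  ∃ u v q, Y.WalkFrom u u c ∧ Y.WalkFrom v v c' ∧ Y.WalkFrom u v q ∧
    Y.InSet sE q ∧ Y.InSet sE c ∧ Y.InSet sE c' ∧
    Y.Homotopic sE sF u u c (q ++ c' ++ Y.revW q)

/-- `c` is a shortest representative of its free homotopy class. -/
def ShortestRep (sE : Set Y.E) (sF : Set Y.F) (c : List Y.D) : Prop :=
  ∀ c', Y.FreelyHomotopic sE sF c c' → c.length ≤ c'.length

end Complex

/-- `s` occurs as a contiguous subword of the cyclic word `c`. -/
def cycContains {α : Type*} (c s : List α) : Prop :=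
  s ≠ [] ∧ s.length ≤ c.length ∧ s <:+: (c ++ c)

namespace Complex

variable {g : ℕ} (Y : Complex g)

/-- The cycle `c` contains no long block and no long chain. -/
def NoLongBlockOrChainCyc (c : List Y.D) : Prop :=
  (∀ s, cycContains c s → ¬ (Y.IsBlock s ∧ 2 * g + 1 ≤ s.length)) ∧
  (∀ bs, Y.IsLongChain bs → ¬ cycContains c bs.flatten)

/-- A (cyclically) non-backtracking cycle. -/
def NonBacktrackingCyc (c : List Y.D) : Prop :=
  ¬ ∃ d : Y.D, cycContains c [d, Y.dRev d]

/-- A cycle which is essential and a shortest representative of its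
free homotopy class. -/
def GoodCycle (c : List Y.D) : Prop :=
  Y.IsCycle c ∧ Y.Essential Set.univ Set.univ c ∧ Y.ShortestRep Set.univ Set.univ c

/-! ### Cells and components of complements -/

/-- The cells of a complex. -/
def Cell := Y.V ⊕ Y.E ⊕ Y.F

def vCell (v : Y.V) : Y.Cell := Sum.inl v
def eCell (e : Y.E) : Y.Cell := Sum.inr (Sum.inl e)
def fCell (f : Y.F) : Y.Cell := Sum.inr (Sum.inr f)

/-- Basic incidence of (open) cells. -/
def inc0 : Y.Cell → Y.Cell → Prop := fun c c' =>
  match c, c' with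
  | Sum.inl v, Sum.inr (Sum.inl e) => Y.src e = v ∨ Y.dst e = v
  | Sum.inl v, Sum.inr (Sum.inr f) => ∃ d ∈ Y.bdry f, Y.dTail d = v
  | Sum.inr (Sum.inl e), Sum.inr (Sum.inr f) => ∃ b, (e, b) ∈ Y.bdry f
  | _, _ => False

/-- Symmetrized incidence of cells. -/
def incid (c c' : Y.Cell) : Prop := Y.inc0 c c' ∨ Y.inc0 c' c

end Complex

/-- A triple of subsets of the cells of a complex `Y` (a prospective subcomplex). -/
structure SubC {g : ℕ} (Y : Complex g) where
  sV : Set Y.V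
  sE : Set Y.E
  sF : Set Y.F

namespace SubC

variable {g : ℕ} {Y : Complex g}

/-- `S` is an actual subcomplex: closed under taking boundaries of cells. -/
def IsSub (S : SubC Y) : Prop :=
  (∀ e ∈ S.sE, Y.src e ∈ S.sV ∧ Y.dst e ∈ S.sV) ∧
  (∀ f ∈ S.sF, ∀ d ∈ Y.bdry f, d.1 ∈ S.sE)

/-- Containment of subcomplexes. -/
def le (S T : SubC Y) : Prop := S.sV ⊆ T.sV ∧ S.sE ⊆ T.sE ∧ S.sF ⊆ T.sF

/-- Compactness: finitely many cells. -/
def Compact (S : SubC Y) : Prop := S.sV.Finite ∧ S.sE.Finite ∧ S.sF.Finite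

/-- Connectivity of the subcomplex. -/
def Connected (S : SubC Y) : Prop :=
  S.sV.Nonempty ∧ ∀ v ∈ S.sV, ∀ w ∈ S.sV, ∃ l, Y.WalkFrom v w l ∧ Y.InSet S.sE l

/-- Image of a subcomplex under a morphism. -/
def image {Z : Complex g} (φ : Hom Y Z) (S : SubC Y) : SubC Z :=
  ⟨φ.mV '' S.sV, φ.mE '' S.sE, φ.mF '' S.sF⟩

end SubC

/-- The whole complex, as a subcomplex of itself. -/
def fullSub {g : ℕ} (Y : Complex g) : SubC Y := ⟨Set.univ, Set.univ, Set.univ⟩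

namespace Complex

variable {g : ℕ} (Y : Complex g)

/-- Membership of a cell in a subcomplex. -/
def inSub (S : SubC Y) : Y.Cell → Prop := fun c =>
  match c with
  | Sum.inl v => v ∈ S.sV
  | Sum.inr (Sum.inl e) => e ∈ S.sE
  | Sum.inr (Sum.inr f) => f ∈ S.sF

/-- Reachability of cells through the open complement of the subcomplex `S`
(= lying in the same connected component of the complement). -/
def reachS (S : SubC Y) (c c' : Y.Cell) : Prop :=
  Relation.ReflTransGen (fun a b => Y.incid a b ∧ ¬ Y.inSub S a ∧ ¬ Y.inSub S b) c c'

end Complex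

/-- The closure (as a subcomplex) of the connected component of the cell `c₀` in the
complement of the subcomplex `S`. -/
def compCl {g : ℕ} (Y : Complex g) (S : SubC Y) (c₀ : Y.Cell) : SubC Y :=
  let cF : Set Y.F := {f | Y.reachS S c₀ (Y.fCell f)}
  let cE : Set Y.E :=
    {e | Y.reachS S c₀ (Y.eCell e)} ∪ {e | ∃ f ∈ cF, ∃ b, (e, b) ∈ Y.bdry f}
  let cV : Set Y.V :=
    {v | Y.reachS S c₀ (Y.vCell v)} ∪ {v | ∃ e ∈ cE, Y.src e = v ∨ Y.dst e = v}
  ⟨cV, cE, cF⟩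

/-- The subcomplex has exactly one boundary cycle (which covers all boundary darts). -/
def OneBdry {g : ℕ} (Y : Complex g) (S : SubC Y) : Prop :=
  ∃ δ, Y.BCycle S.sE S.sF δ ∧ ∀ d, Y.IsBDart S.sE S.sF d → d ∈ δ

/-- The subcomplex has exactly two (disjoint) boundary cycles, covering all
boundary darts. -/
def TwoBdry {g : ℕ} (Y : Complex g) (S : SubC Y) : Prop :=
  ∃ δ₁ δ₂, Y.BCycle S.sE S.sF δ₁ ∧ Y.BCycle S.sE S.sF δ₂ ∧ δ₁.Disjoint δ₂ ∧
    ∀ d, Y.IsBDart S.sE S.sF d → d ∈ δ₁ ∨ d ∈ δ₂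

/-- The boundary-reduced closure of `S` inside `Y`: the intersection of all
intermediate boundary reduced subcomplexes. -/
def BRcl {g : ℕ} (Y : Complex g) (S : SubC Y) : SubC Y where
  sV := ⋂ T ∈ {T : SubC Y | T.IsSub ∧ S.le T ∧ Y.BoundaryReduced T.sE T.sF}, T.sV
  sE := ⋂ T ∈ {T : SubC Y | T.IsSub ∧ S.le T ∧ Y.BoundaryReduced T.sE T.sF}, T.sE
  sF := ⋂ T ∈ {T : SubC Y | T.IsSub ∧ S.le T ∧ Y.BoundaryReduced T.sE T.sF}, T.sF

/-- The strongly-boundary-reduced closure of `S` inside `Y`. -/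
def SBRcl {g : ℕ} (Y : Complex g) (S : SubC Y) : SubC Y where
  sV := ⋂ T ∈ {T : SubC Y | T.IsSub ∧ S.le T ∧ Y.StronglyBoundaryReduced T.sE T.sF}, T.sV
  sE := ⋂ T ∈ {T : SubC Y | T.IsSub ∧ S.le T ∧ Y.StronglyBoundaryReduced T.sE T.sF}, T.sE
  sF := ⋂ T ∈ {T : SubC Y | T.IsSub ∧ S.le T ∧ Y.StronglyBoundaryReduced T.sE T.sF}, T.sF

/-- An isomorphism between the subcomplex `S` of `Y` and the subcomplex `T` of `Z`. -/
structure SubEquiv {g : ℕ} (Y : Complex g) (S : SubC Y) (Z : Complex g) (T : SubC Z) where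
  fV : Y.V → Z.V
  fE : Y.E → Z.E
  fF : Y.F → Z.F
  bijV : Set.BijOn fV S.sV T.sV
  bijE : Set.BijOn fE S.sE T.sE
  bijF : Set.BijOn fF S.sF T.sF
  hsrc : ∀ e ∈ S.sE, Z.src (fE e) = fV (Y.src e)
  hdst : ∀ e ∈ S.sE, Z.dst (fE e) = fV (Y.dst e)
  hlab : ∀ e ∈ S.sE, Z.lab (fE e) = Y.lab e
  hbdry : ∀ f ∈ S.sF, Z.bdry (fF f) = (Y.bdry f).map fun d => (fE d.1, d.2)

/-- `FunnelComponent Y S c₀`: the connected component of the cell `c₀` in the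
complement of the subcomplex `S` is a twice-punctured sphere with one funnel and
one fake-puncture.  Rendered combinatorially: the component contains infinitely
many `4g`-gons (the funnel); there is a boundary cycle `δ` of `S` adjacent to the
component, it is unique (one fake-puncture), and every closed walk inside the
closure of the component is freely homotopic there to a power of `δ` or of its
inverse (so the closure is a half-open annulus bounded by `δ`). -/
def FunnelComponent {g : ℕ} (Y : Complex g) (S : SubC Y) (c₀ : Y.Cell) : Prop :=
  {f : Y.F | Y.reachS S c₀ (Y.fCell f)}.Infinite ∧
  ∃ δ : List Y.D, Y.BCycle S.sE S.sF δ ∧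
    (∃ d ∈ δ, ∃ c', Y.incid (Y.eCell d.1) c' ∧ Y.reachS S c₀ c') ∧
    (∀ δ', Y.BCycle S.sE S.sF δ' →
      (∃ d ∈ δ', ∃ c', Y.incid (Y.eCell d.1) c' ∧ Y.reachS S c₀ c') →
      ∃ n, δ' = δ.rotate n) ∧
    (∀ (v : Y.V) (l : List Y.D), Y.WalkFrom v v l →
      Y.InSet ({e | Y.reachS S c₀ (Y.eCell e)} ∪ {e | ∃ b, (e, b) ∈ δ}) l →
      ∃ n,
        Y.FreelyHomotopic ({e | Y.reachS S c₀ (Y.eCell e)} ∪ {e | ∃ b, (e, b) ∈ δ})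
          {f | Y.reachS S c₀ (Y.fCell f)} l ((List.replicate n δ).flatten) ∨
        Y.FreelyHomotopic ({e | Y.reachS S c₀ (Y.eCell e)} ∪ {e | ∃ b, (e, b) ∈ δ})
          {f | Y.reachS S c₀ (Y.fCell f)} l ((List.replicate n (Y.revW δ)).flatten))

/-- `Y` contains a funnel: an essential cycle `δ` of `Y` cutting off an infinite
region of `Y` which is attached to the rest of `Y` only along `δ`, contains no
boundary of `Y`, and is a half-open annulus (every loop inside is freely homotopic
to a power of `δ`); i.e. an end of `Y` which is a puncture of the ambient covering. -/
def HasFunnel {g : ℕ} (Y : Complex g) : Prop :=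
  ∃ (δ : List Y.D) (sE : Set Y.E) (sF : Set Y.F),
    Y.IsCycle δ ∧ Y.Essential Set.univ Set.univ δ ∧
    (∀ d ∈ δ, d.1 ∉ sE) ∧ sE.Nonempty ∧ sF.Infinite ∧
    (∀ f ∈ sF, ∀ d ∈ Y.bdry f, d.1 ∈ sE ∨ ∃ b, (d.1, b) ∈ δ) ∧
    (∀ f : Y.F, (∃ d ∈ Y.bdry f, d.1 ∈ sE) → f ∈ sF) ∧
    (∀ d : Y.D, d.1 ∈ sE → ¬ Y.IsBDart Set.univ Set.univ d) ∧
    (∀ v : Y.V, (∃ e ∈ sE, Y.src e = v ∨ Y.dst e = v) → (∀ d ∈ δ, Y.dTail d ≠ v) →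
      ∀ e' : Y.E, (Y.src e' = v ∨ Y.dst e' = v) → e' ∈ sE) ∧
    (∀ (v : Y.V) (l : List Y.D), Y.WalkFrom v v l →
      Y.InSet (sE ∪ {e | ∃ b, (e, b) ∈ δ}) l →
      ∃ n,
        Y.FreelyHomotopic (sE ∪ {e | ∃ b, (e, b) ∈ δ}) sF l
          ((List.replicate n δ).flatten) ∨
        Y.FreelyHomotopic (sE ∪ {e | ∃ b, (e, b) ∈ δ}) sF l
          ((List.replicate n (Y.revW δ)).flatten))

/-- The fundamental group of `Y` is cyclic: some closed walk `c` generates all free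
homotopy classes of loops.  (For a connected surface this is *equivalent to NOT
having genus ≥ 1 or at least 3 boundary components/punctures*.) -/
def CyclicPi1 {g : ℕ} (Y : Complex g) : Prop :=
  ∃ c : List Y.D, ∀ (v : Y.V) (l : List Y.D), Y.WalkFrom v v l →
    ∃ n,
      Y.FreelyHomotopic Set.univ Set.univ l ((List.replicate n c).flatten) ∨
      Y.FreelyHomotopic Set.univ Set.univ l ((List.replicate n (Y.revW c)).flatten)

/-! ### The covering space `J\~Σ_g` and the core surface of `J` -/

/-- Right cosets `Jx` of `J` in `Γ_g` — the vertices (and faces) of `J\~Σ_g`. -/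
abbrev Cos (g : ℕ) (J : Subgroup (Gamma g)) := Quotient (QuotientGroup.rightRel J)

/-- The coset `Jx`. -/
def mkCos (g : ℕ) (J : Subgroup (Gamma g)) (x : Gamma g) : Cos g J :=
  Quotient.mk _ x

/-- Right multiplication on right cosets. -/
def rmul (g : ℕ) (J : Subgroup (Gamma g)) (x : Gamma g) : Cos g J → Cos g J :=
  Quotient.map (· * x) (by
    intro a b hab
    have h1 : b * a⁻¹ ∈ J := QuotientGroup.rightRel_apply.mp hab
    refine QuotientGroup.rightRel_apply.mpr ?_
    have h2 : b * x * (a * x)⁻¹ = b * a⁻¹ := by group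
    rw [h2]; exact h1)

/-- The walk in `J\~Σ_g` starting at a vertex and reading a given word. -/
def relWalk (g : ℕ) (J : Subgroup (Gamma g)) :
    Cos g J → List (Letter g) → List ((Cos g J × Fin (2 * g)) × Bool)
  | _, [] => []
  | v, (ℓ, true) :: w =>
      ((v, ℓ), true) :: relWalk g J (rmul g J (PresentedGroup.of ℓ) v) w
  | v, (ℓ, false) :: w =>
      ((rmul g J (PresentedGroup.of ℓ)⁻¹ v, ℓ), false) ::
        relWalk g J (rmul g J (PresentedGroup.of ℓ)⁻¹ v) w

/-- The covering space `Υ = J\~Σ_g` of `Σ_g` corresponding to the subgroup `J`,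
with the CW-structure pulled back from `Σ_g`: vertices and `4g`-gons are the right
cosets of `J`, and each vertex carries one outgoing edge per label. -/
def cover (g : ℕ) (J : Subgroup (Gamma g)) : Complex g where
  V := Cos g J
  E := Cos g J × Fin (2 * g)
  F := Cos g J
  src e := e.1
  dst e := rmul g J (PresentedGroup.of e.2) e.1
  lab e := e.2
  bdry v := relWalk g J v (relatorWord g)

/-- The map `J₁\~Σ_g → J₂\~Σ_g` on vertices, for `J₁ ≤ J₂`. -/
def coverMapV {g : ℕ} {J₁ J₂ : Subgroup (Gamma g)} (h : J₁ ≤ J₂) :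
    Cos g J₁ → Cos g J₂ :=
  Quotient.map id (by
    intro a b hab
    have h1 : b * a⁻¹ ∈ J₁ := QuotientGroup.rightRel_apply.mp hab
    exact QuotientGroup.rightRel_apply.mpr (h h1))

/-- The natural covering morphism on edges. -/
def coverMapE {g : ℕ} {J₁ J₂ : Subgroup (Gamma g)} (h : J₁ ≤ J₂)
    (e : (cover g J₁).E) : (cover g J₂).E :=
  (coverMapV h e.1, e.2)

/-- The natural covering morphism on darts. -/
def coverMapD {g : ℕ} {J₁ J₂ : Subgroup (Gamma g)} (h : J₁ ≤ J₂)
    (d : (cover g J₁).D) : (cover g J₂).D :=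
  (coverMapE h d.1, d.2)

/-- The cycle `c` in `J\~Σ_g` represents the conjugacy class of `γ` in `J`
(conjugacy classes in `J` ↔ free homotopy classes of essential loops in `J\~Σ_g`). -/
def RepCls {g : ℕ} (J : Subgroup (Gamma g)) (c : List ((cover g J).D))
    (γ : Gamma g) : Prop :=
  ∃ x j : Gamma g, j ∈ J ∧
    (cover g J).WalkFrom (mkCos g J x) (mkCos g J x) c ∧
    x * wordG ((cover g J).wordOf c) * x⁻¹ = j * γ * j⁻¹

/-- Step (i) of the definition of the core surface: the edges lying on some
shortest representative cycle of an essential free homotopy class. -/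
def coreE1 (g : ℕ) (J : Subgroup (Gamma g)) : Set (cover g J).E :=
  {e | ∃ c, (cover g J).GoodCycle c ∧ ∃ b, (e, b) ∈ c}

/-- The vertices of step (i) of the definition of the core surface. -/
def coreV1 (g : ℕ) (J : Subgroup (Gamma g)) : Set (cover g J).V :=
  {v | ∃ e ∈ coreE1 g J, (cover g J).src e = v ∨ (cover g J).dst e = v}

/-- Step (i) of the definition of the core surface, as a subcomplex of `J\~Σ_g`. -/
def coreS1 (g : ℕ) (J : Subgroup (Gamma g)) : SubC (cover g J) :=
  ⟨coreV1 g J, coreE1 g J, ∅⟩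

/-- A cell of `J\~Σ_g` lying in a connected component of the complement of step (i)
which contains only finitely many `4g`-gons. -/
def coreFin (g : ℕ) (J : Subgroup (Gamma g)) (c : (cover g J).Cell) : Prop :=
  ¬ (cover g J).inSub (coreS1 g J) c ∧
  {f : (cover g J).F | (cover g J).reachS (coreS1 g J) c ((cover g J).fCell f)}.Finite

open Classical in
/-- The core surface `Core(J)` of a subgroup `J ≤ Γ_g`, as a subcomplex of
`Υ = J\~Σ_g`: (i) the union of all shortest representative cycles of essential
free homotopy classes in `Υ`, together with (ii) all connected components of the
complement containing finitely many `4g`-gons.  For the trivial subgroup it is a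
single vertex. -/
def coreSub (g : ℕ) (J : Subgroup (Gamma g)) : SubC (cover g J) :=
  if J = ⊥ then ⟨{mkCos g J 1}, ∅, ∅⟩
  else
    ⟨coreV1 g J ∪ {v | coreFin g J ((cover g J).vCell v)},
     coreE1 g J ∪ {e | coreFin g J ((cover g J).eCell e)},
     {f | coreFin g J ((cover g J).fCell f)}⟩

/-! ### Proof of the intrinsic characterization -/

section Proof

variable {g : ℕ}

theorem wordG_nil : wordG ([] : List (Letter g)) = 1 := rfl

theorem wordG_cons (l : Letter g) (w : List (Letter g)) :
    wordG (l :: w) = letterG l * wordG w := by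
  simp [wordG]

theorem wordG_append (w w' : List (Letter g)) :
    wordG (w ++ w') = wordG w * wordG w' := by
  simp [wordG]

theorem wordG_relator : wordG (relatorWord g) = 1 := by
  have h : PresentedGroup.mk ({relatorF g} : Set (FreeGroup (Fin (2 * g)))) (relatorF g) = 1 :=
    PresentedGroup.one_of_mem (by simp)
  rw [← h]
  unfold relatorF wordG
  rw [map_list_prod, List.map_map]
  congr 1
  apply List.map_congr_left
  intro l _
  simp only [letterG, Function.comp]
  split_ifs
  · rfl
  · rw [map_inv]; rfl

/-! #### Walk lemmas -/

theorem walk_nil {Y : Complex g} {u v : Y.V} (h : Y.WalkFrom u v []) : u = v := by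
  cases h; rfl

theorem walk_cons {Y : Complex g} {u v : Y.V} {d : Y.D} {l : List Y.D}
    (h : Y.WalkFrom u v (d :: l)) : u = Y.dTail d ∧ Y.WalkFrom (Y.dHead d) v l := by
  cases h with
  | cons _ h => exact ⟨rfl, h⟩

theorem walk_cons' {Y : Complex g} {u v : Y.V} {d : Y.D} {l : List Y.D}
    (h0 : u = Y.dTail d) (h : Y.WalkFrom (Y.dHead d) v l) : Y.WalkFrom u v (d :: l) := by
  subst h0; exact .cons d h

theorem walk_append {Y : Complex g} {u v w : Y.V} {l l' : List Y.D}
    (h : Y.WalkFrom u v l) (h' : Y.WalkFrom v w l') : Y.WalkFrom u w (l ++ l') := by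
  induction h with
  | nil v => exact h'
  | cons d _ ih => exact .cons d (ih h')

theorem letterG_rev {Y : Complex g} (d : Y.D) :
    letterG (Y.dLet (Y.dRev d)) = (letterG (Y.dLet d))⁻¹ := by
  obtain ⟨e, b⟩ := d
  cases b <;> simp [letterG, Complex.dLet, Complex.dRev]

theorem walk_rev {Y : Complex g} {u v : Y.V} {l : List Y.D}
    (h : Y.WalkFrom u v l) : Y.WalkFrom v u (Y.revW l) ∧
      wordG (Y.wordOf (Y.revW l)) = (wordG (Y.wordOf l))⁻¹ := by
  induction h with
  | nil v => exact ⟨.nil v, by simp [Complex.revW, Complex.wordOf, wordG]⟩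
  | cons d _ ih =>
    obtain ⟨ih1, ih2⟩ := ih
    have e : Y.revW (d :: ‹List Y.D›) = Y.revW ‹List Y.D› ++ [Y.dRev d] := by
      simp [Complex.revW]
    constructor
    · rw [e]
      refine walk_append ih1 (walk_cons' ?_ ?_)
      · obtain ⟨e, b⟩ := d
        cases b <;> rfl
      · obtain ⟨e, b⟩ := d
        cases b <;> exact .nil _
    · rw [e]
      simp only [Complex.wordOf, List.map_append, wordG_append, List.map_cons, List.map_nil,
        wordG_cons, wordG_nil, letterG_rev, mul_inv_rev, mul_one] at ih2 ⊢
      rw [ih2]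

theorem walk_map {Y Z : Complex g} (φ : Hom Y Z) {u v : Y.V} {l : List Y.D}
    (h : Y.WalkFrom u v l) : Z.WalkFrom (φ.mV u) (φ.mV v) (l.map φ.mD) := by
  induction h with
  | nil v => exact .nil _
  | cons d _ ih =>
    obtain ⟨e, b⟩ := d
    refine walk_cons' ?_ ?_
    · cases b <;> simp [Complex.dTail, Hom.mD, φ.hsrc, φ.hdst]
    · convert ih using 1
      cases b <;> simp [Complex.dHead, Hom.mD, φ.hsrc, φ.hdst]

theorem wordOf_map {Y Z : Complex g} (φ : Hom Y Z) (l : List Y.D) :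
    Z.wordOf (l.map φ.mD) = Y.wordOf l := by
  simp only [Complex.wordOf, List.map_map]
  apply List.map_congr_left
  intro d _
  simp [Complex.dLet, Hom.mD, φ.hlab]

theorem dTail_map {Y Z : Complex g} (φ : Hom Y Z) (d : Y.D) :
    Z.dTail (φ.mD d) = φ.mV (Y.dTail d) := by
  obtain ⟨e, b⟩ := d
  cases b <;> simp [Complex.dTail, Hom.mD, φ.hsrc, φ.hdst]

theorem dHead_map {Y Z : Complex g} (φ : Hom Y Z) (d : Y.D) :
    Z.dHead (φ.mD d) = φ.mV (Y.dHead d) := by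
  obtain ⟨e, b⟩ := d
  cases b <;> simp [Complex.dHead, Hom.mD, φ.hsrc, φ.hdst]

theorem walk_comap {Y Z : Complex g} (φ : Hom Y Z) (hi : Function.Injective φ.mV)
    (l : List Y.D) : ∀ (u v : Y.V), Z.WalkFrom (φ.mV u) (φ.mV v) (l.map φ.mD) →
      Y.WalkFrom u v l := by
  induction l with
  | nil =>
    intro u v h
    have := hi (walk_nil h)
    subst this
    exact .nil _
  | cons d l ih =>
    intro u v h
    obtain ⟨h1, h2⟩ := walk_cons h
    rw [dTail_map] at h1
    rw [dHead_map] at h2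
    exact walk_cons' (hi h1) (ih _ _ h2)

theorem walk_end {Y Z : Complex g} (φ : Hom Y Z) (l : List Y.D) :
    ∀ (u : Y.V) (y : Z.V), Z.WalkFrom (φ.mV u) y (l.map φ.mD) → ∃ v, y = φ.mV v := by
  induction l with
  | nil =>
    intro u y h
    exact ⟨u, (walk_nil h).symm⟩
  | cons d l ih =>
    intro u v h
    obtain ⟨h1, h2⟩ := walk_cons h
    rw [dHead_map] at h2
    exact ih _ _ h2

/-! #### Coverings satisfy P2 -/

def covPerm (Z : Complex g) (hZ : Z.IsCovering) (ℓ : Fin (2 * g)) : Equiv.Perm Z.V :=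
  Equiv.ofBijective (fun v => Z.dst (hZ.2.2.1 v ℓ).choose) (by
    constructor
    · intro v v' h
      have s := (hZ.2.2.1 v ℓ).choose_spec
      have s' := (hZ.2.2.1 v' ℓ).choose_spec
      have := hZ.1.2 _ _ h (s.2.trans s'.2.symm)
      rw [← s.1, ← s'.1, this]
    · intro v
      obtain ⟨e, he, hl⟩ := hZ.2.2.2.1 v ℓ
      refine ⟨Z.src e, ?_⟩
      have s := (hZ.2.2.1 (Z.src e) ℓ).choose_spec
      have := hZ.1.1 _ _ s.1 (s.2.trans hl.symm)
      simp only [this, he])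

theorem covPerm_src (Z : Complex g) (hZ : Z.IsCovering) (e : Z.E) :
    covPerm Z hZ (Z.lab e) (Z.src e) = Z.dst e := by
  have s := (hZ.2.2.1 (Z.src e) (Z.lab e)).choose_spec
  have := hZ.1.1 _ _ s.1 s.2
  exact congrArg Z.dst this

def covLet (Z : Complex g) (hZ : Z.IsCovering) (l : Letter g) : (Equiv.Perm Z.V)ᵐᵒᵖ :=
  if l.2 then MulOpposite.op (covPerm Z hZ l.1) else (MulOpposite.op (covPerm Z hZ l.1))⁻¹

theorem covLet_dart (Z : Complex g) (hZ : Z.IsCovering) (d : Z.D) :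
    (covLet Z hZ (Z.dLet d)).unop (Z.dTail d) = Z.dHead d := by
  obtain ⟨e, b⟩ := d
  cases b
  · simp [covLet, Complex.dLet, Complex.dTail, Complex.dHead, ← covPerm_src Z hZ e]
  · simp [covLet, Complex.dLet, Complex.dTail, Complex.dHead, ← covPerm_src Z hZ e]

theorem cov_walk (Z : Complex g) (hZ : Z.IsCovering) {u v : Z.V} {l : List Z.D}
    (h : Z.WalkFrom u v l) : ((Z.wordOf l).map (covLet Z hZ)).prod.unop u = v := by
  induction h with
  | nil v => simp [Complex.wordOf]
  | cons d _ ih =>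
    simp only [Complex.wordOf, List.map_cons, List.prod_cons, MulOpposite.unop_mul,
      Equiv.Perm.mul_apply, covLet_dart] at ih ⊢
    exact ih

theorem cov_exists (Z : Complex g) (hZ : Z.IsCovering) (w : List (Letter g)) :
    ∀ u, ∃ v l, Z.WalkFrom u v l ∧ Z.wordOf l = w := by
  induction w with
  | nil => intro u; exact ⟨u, [], .nil u, rfl⟩
  | cons a w ih =>
    intro u
    have : ∃ d : Z.D, Z.dTail d = u ∧ Z.dLet d = a := by
      obtain ⟨ℓ, b⟩ := a
      cases b
      · obtain ⟨e, h1, h2⟩ := hZ.2.2.2.1 u ℓ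
        exact ⟨(e, false), by simpa [Complex.dTail] using h1, by simp [Complex.dLet, h2]⟩
      · obtain ⟨e, h1, h2⟩ := hZ.2.2.1 u ℓ
        exact ⟨(e, true), by simpa [Complex.dTail] using h1, by simp [Complex.dLet, h2]⟩
    obtain ⟨d, h1, h2⟩ := this
    obtain ⟨v, l, h3, h4⟩ := ih (Z.dHead d)
    refine ⟨v, d :: l, walk_cons' h1.symm h3, ?_⟩
    simp only [Complex.wordOf, List.map_cons] at h4 ⊢
    rw [h4, h2]

theorem cov_relator (Z : Complex g) (hZ : Z.IsCovering) :
    ((relatorWord g).map (covLet Z hZ)).prod = 1 := by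
  apply MulOpposite.unop_injective
  ext u
  obtain ⟨v, l, h, hw⟩ := cov_exists Z hZ (relatorWord g) u
  have h1 := cov_walk Z hZ h
  have h2 := hZ.2.2.2.2.1 u v l h hw
  rw [hw] at h1
  rw [h1, ← h2]
  rfl

theorem cov_P2 (Z : Complex g) (hZ : Z.IsCovering) : Z.P2 := by
  intro u v l h hw
  have hrel : ∀ r ∈ ({relatorF g} : Set (FreeGroup (Fin (2 * g)))),
      FreeGroup.lift (fun ℓ => MulOpposite.op (covPerm Z hZ ℓ)) r = 1 := by
    intro r hr
    rw [Set.mem_singleton_iff] at hr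
    subst hr
    rw [← cov_relator Z hZ, relatorF, map_list_prod, List.map_map]
    congr 1
    apply List.map_congr_left
    intro a _
    simp only [Function.comp, covLet]
    split_ifs <;> simp
  have key : ∀ w : List (Letter g),
      PresentedGroup.toGroup hrel (wordG w) = (w.map (covLet Z hZ)).prod := by
    intro w
    rw [wordG, map_list_prod, List.map_map]
    congr 1
    apply List.map_congr_left
    intro a _
    simp only [Function.comp, covLet, letterG]
    split_ifs
    · exact PresentedGroup.toGroup.of hrel
    · rw [map_inv]; exact congrArg _ (PresentedGroup.toGroup.of hrel)
  have h1 := cov_walk Z hZ h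
  rw [← key, hw, map_one] at h1
  simpa using h1

theorem tiled_imp (hg : 2 ≤ g) (Y : Complex g) (h : Y.IsTiledSurface) :
    Y.P1 ∧ Y.P2 ∧ Y.P3 := by
  obtain ⟨Z, hZ, φ, hV, hE, hF⟩ := h
  refine ⟨⟨?_, ?_⟩, ?_, ?_, ?_⟩
  · intro e e' h1 h2
    exact hE (hZ.1.1 _ _ (by rw [φ.hsrc, φ.hsrc, h1]) (by rw [φ.hlab, φ.hlab, h2]))
  · intro e e' h1 h2
    exact hE (hZ.1.2 _ _ (by rw [φ.hdst, φ.hdst, h1]) (by rw [φ.hlab, φ.hlab, h2]))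
  · intro u v l hl hw
    exact hV (cov_P2 Z hZ _ _ _ (walk_map φ hl) (by rw [wordOf_map, hw]))
  · intro f
    obtain ⟨⟨x, hx⟩, hw⟩ := hZ.2.1.1 (φ.mF f)
    have hb : Z.bdry (φ.mF f) = (Y.bdry f).map φ.mD := φ.hbdry f
    rw [hb] at hx hw
    rw [wordOf_map] at hw
    refine ⟨?_, hw⟩
    cases hl : Y.bdry f with
    | nil =>
      exfalso
      rw [hl] at hw
      have := congrArg List.length hw
      simp [Complex.wordOf, relatorWord] at this
      omega
    | cons d l =>
      have hx' := hx
      rw [hl] at hx'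
      have h1 := (walk_cons hx').1
      rw [dTail_map] at h1
      subst h1
      refine ⟨Y.dTail d, ?_⟩
      rw [← hl]
      exact walk_comap φ hV _ _ _ hx
  · intro f f' hff
    exact hF (hZ.2.1.2 (by rw [φ.hbdry, φ.hbdry, hff]))

/-! #### The covering associated with a right action -/

def actDart {X : Type} (α : X → Gamma g → X) (v : X) (l : Letter g) :
    (X × Fin (2 * g)) × Bool :=
  ((if l.2 then v else α v (letterG l), l.1), l.2)

def actWalk {X : Type} (α : X → Gamma g → X) :
    X → List (Letter g) → List ((X × Fin (2 * g)) × Bool)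
  | _, [] => []
  | v, l :: w => actDart α v l :: actWalk α (α v (letterG l)) w

def actC {X : Type} (α : X → Gamma g → X) : Complex g where
  V := X
  E := X × Fin (2 * g)
  F := X
  src e := e.1
  dst e := α e.1 (PresentedGroup.of e.2)
  lab e := e.2
  bdry v := actWalk α v (relatorWord g)

section Act

variable {X : Type} (α : X → Gamma g → X)

theorem actDart_spec (h1 : ∀ v, α v 1 = v)
    (hm : ∀ v x y, α v (x * y) = α (α v x) y) (v : X) (l : Letter g) :
    (actC α).dTail (actDart α v l) = v ∧ (actC α).dHead (actDart α v l) = α v (letterG l) ∧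
    (actC α).dLet (actDart α v l) = l := by
  obtain ⟨ℓ, b⟩ := l
  cases b <;>
    simp [actDart, actC, Complex.dTail, Complex.dHead, Complex.dLet, letterG, ← hm, h1]

theorem actDart_uniq (h1 : ∀ v, α v 1 = v)
    (hm : ∀ v x y, α v (x * y) = α (α v x) y) (d : (actC α).D) :
    d = actDart α ((actC α).dTail d) ((actC α).dLet d) := by
  obtain ⟨⟨v, ℓ⟩, b⟩ := d
  cases b <;>
    simp [actDart, actC, Complex.dTail, Complex.dLet, letterG, ← hm, h1]

theorem actWalk_spec (h1 : ∀ v, α v 1 = v)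
    (hm : ∀ v x y, α v (x * y) = α (α v x) y) (w : List (Letter g)) : ∀ v : X,
    (actC α).WalkFrom v (α v (wordG w)) (actWalk α v w) ∧
    (actC α).wordOf (actWalk α v w) = w := by
  induction w with
  | nil => intro v; rw [wordG_nil, h1]; exact ⟨.nil _, rfl⟩
  | cons a w ih =>
    intro v
    obtain ⟨i1, i2⟩ := ih (α v (letterG a))
    obtain ⟨s1, s2, s3⟩ := actDart_spec α h1 hm v a
    constructor
    · rw [wordG_cons, hm]
      refine walk_cons' s1.symm ?_
      rw [s2]
      exact i1
    · change (actC α).dLet (actDart α v a) :: (actC α).wordOf _ = _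
      rw [s3, i2]

theorem actWalk_uniq (h1 : ∀ v, α v 1 = v)
    (hm : ∀ v x y, α v (x * y) = α (α v x) y) {u v : (actC α).V} {l : List (actC α).D} (h : (actC α).WalkFrom u v l) :
    l = actWalk α u ((actC α).wordOf l) ∧ (show X from v) = α u (wordG ((actC α).wordOf l)) := by
  induction h with
  | nil v => exact ⟨rfl, (h1 v).symm⟩
  | @cons d v l _ ih =>
    obtain ⟨i1, i2⟩ := ih
    obtain ⟨s1, s2, s3⟩ := actDart_spec α h1 hm ((actC α).dTail d) ((actC α).dLet d)
    have hd := actDart_uniq α h1 hm d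
    rw [← hd] at s2
    have e : (actC α).wordOf (d :: l) = (actC α).dLet d :: (actC α).wordOf l := rfl
    rw [e]
    constructor
    · exact congrArg₂ List.cons hd (i1.trans
        (congrArg (fun x : X => actWalk α x ((actC α).wordOf l)) s2))
    · rw [wordG_cons]
      exact i2.trans ((congrArg (fun x : X => α x (wordG ((actC α).wordOf l))) s2).trans
        (hm _ _ _).symm)

theorem actC_covering (h1 : ∀ v, α v 1 = v)
    (hm : ∀ v x y, α v (x * y) = α (α v x) y) (hg : 2 ≤ g) : (actC α).IsCovering := by
  refine ⟨⟨?_, ?_⟩, ⟨?_, ?_⟩, ?_, ?_, ?_, ?_⟩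
  · rintro ⟨v, ℓ⟩ ⟨v', ℓ'⟩ h h'
    exact Prod.ext h h'
  · rintro ⟨v, ℓ⟩ ⟨v', ℓ'⟩ h h'
    have h' : ℓ = ℓ' := h'
    subst h'
    have h : α v (PresentedGroup.of ℓ) = α v' (PresentedGroup.of ℓ) := h
    have := congrArg (fun x => α x (PresentedGroup.of ℓ)⁻¹) h
    simp only [← hm, mul_inv_cancel, h1] at this
    rw [this]
  · intro (v : X)
    obtain ⟨a, b⟩ := actWalk_spec α h1 hm (relatorWord g) v
    have e : α v (wordG (relatorWord g)) = v := by rw [wordG_relator, h1]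
    have key : ∀ x : X, x = v → (actC α).WalkFrom v x (actWalk α v (relatorWord g)) →
        (actC α).WalkFrom v v (actWalk α v (relatorWord g)) := by
      intro x hx hw
      subst hx
      exact hw
    exact ⟨⟨v, key _ e a⟩, b⟩
  · intro (v : X) (v' : X) h
    have h : actWalk α v (relatorWord g) = actWalk α v' (relatorWord g) := h
    cases hr : relatorWord g with
    | nil =>
      have := congrArg List.length hr
      simp [relatorWord] at this
      omega
    | cons a w =>
      rw [hr] at h
      simp only [actWalk] at h
      have := congrArg (actC α).dTail (List.cons.inj h).1
      rwa [(actDart_spec α h1 hm v a).1, (actDart_spec α h1 hm v' a).1] at this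
  · intro v ℓ
    exact ⟨(v, ℓ), rfl, rfl⟩
  · intro (v : X) ℓ
    refine ⟨(α v (PresentedGroup.of ℓ)⁻¹, ℓ), ?_, rfl⟩
    change α (α v (PresentedGroup.of ℓ)⁻¹) (PresentedGroup.of ℓ) = v
    rw [← hm, inv_mul_cancel, h1]
  · intro (u : X) (v : X) l h hw
    have := (actWalk_uniq α h1 hm h).2
    rw [hw, wordG_relator] at this
    exact (this.trans (h1 u)).symm
  · intro v l h hw
    refine ⟨v, ?_⟩
    have := (actWalk_uniq α h1 hm h).1
    rw [hw] at this
    exact this.symm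

end Act

/-! #### The induced action -/

/-- `(u, x) ∼ (v, y)` iff some walk from `u` to `v` reads `x y⁻¹`. -/
def indSetoid (Y : Complex g) : Setoid (Y.V × Gamma g) where
  r p q := ∃ l, Y.WalkFrom p.1 q.1 l ∧ p.2 = wordG (Y.wordOf l) * q.2
  iseqv := by
    refine ⟨?_, ?_, ?_⟩
    · intro p
      exact ⟨[], .nil _, by simp [Complex.wordOf, wordG]⟩
    · rintro p q ⟨l, h, e⟩
      obtain ⟨h', e'⟩ := walk_rev h
      exact ⟨_, h', by rw [e', e, inv_mul_cancel_left]⟩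
    · rintro p q r ⟨l, h, e⟩ ⟨l', h', e'⟩
      refine ⟨_, walk_append h h', ?_⟩
      rw [e, e', ← mul_assoc, ← wordG_append]
      simp [Complex.wordOf]

def indX (Y : Complex g) : Type := Quotient (indSetoid Y)

def indMk (Y : Complex g) (v : Y.V) (x : Gamma g) : indX Y := Quotient.mk (indSetoid Y) (v, x)

def indAct (Y : Complex g) (p : indX Y) (x : Gamma g) : indX Y :=
  Quotient.map (sa := indSetoid Y) (sb := indSetoid Y) (fun p => (p.1, p.2 * x)) (by
    rintro p q ⟨l, h, e⟩
    exact ⟨l, h, by simp only [e, mul_assoc]⟩) p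

theorem indMk_walk (Y : Complex g) {u v : Y.V} {l : List Y.D} (h : Y.WalkFrom u v l) :
    indAct Y (indMk Y u 1) (wordG (Y.wordOf l)) = indMk Y v 1 :=
  Quotient.sound (s := indSetoid Y) ⟨l, h, by simp⟩

theorem imp_tiled (hg : 2 ≤ g) (Y : Complex g) (hP1 : Y.P1) (hP2 : Y.P2) (hP3 : Y.P3) :
    Y.IsTiledSurface := by
  have h1 : ∀ v, indAct Y v 1 = v := by
    rintro ⟨u, x⟩
    change indMk Y u (x * 1) = indMk Y u x
    rw [mul_one]
  have hm : ∀ v x y, indAct Y v (x * y) = indAct Y (indAct Y v x) y := by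
    rintro ⟨u, z⟩ x y
    change indMk Y u (z * (x * y)) = indMk Y u (z * x * y)
    rw [mul_assoc]
  have hV : Function.Injective (fun v => indMk Y v 1) := by
    intro u v h
    obtain ⟨l, hl, e⟩ := Quotient.exact (s := indSetoid Y) h
    exact hP2 u v l hl (by simpa using e.symm)
  have hE : Function.Injective (fun e => (indMk Y (Y.src e) 1, Y.lab e)) := by
    intro e e' h
    simp only [Prod.mk.injEq] at h
    exact hP1.1 _ _ (hV h.1) h.2
  have hdst : ∀ e, indAct Y (indMk Y (Y.src e) 1) (PresentedGroup.of (Y.lab e))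
      = indMk Y (Y.dst e) 1 := by
    intro e
    have := indMk_walk Y (u := Y.src e) (v := Y.dst e) (l := [(e, true)])
      (walk_cons' (by simp [Complex.dTail]) (by simpa [Complex.dHead] using .nil _))
    simpa [Complex.wordOf, Complex.dLet, wordG, letterG] using this
  -- the 1-skeleton map as a Hom from the faceless complex
  let Y1 : Complex g :=
    { V := Y.V, E := Y.E, F := Empty, src := Y.src, dst := Y.dst, lab := Y.lab, bdry := Empty.elim }
  let ψ : Hom Y1 (actC (indAct Y)) :=
    { mV := fun v => indMk Y v 1
      mE := fun e => (indMk Y (Y.src e) 1, Y.lab e)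
      mF := Empty.elim
      hsrc := fun e => rfl
      hdst := hdst
      hlab := fun e => rfl
      hbdry := fun f => f.elim }
  have conv : ∀ {u v : Y.V} {l : List Y.D}, Y.WalkFrom u v l → Y1.WalkFrom u v l := by
    intro u v l h
    induction h with
    | nil v => exact .nil (Y := Y1) v
    | cons d _ ih => exact .cons (Y := Y1) d ih
  have hb : ∀ f, (actC (indAct Y)).bdry (indMk Y (hP3.1 f).1.choose 1) =
      (Y.bdry f).map fun d => ((indMk Y (Y.src d.1) 1, Y.lab d.1), d.2) := by
    intro f
    have hw := (hP3.1 f).1.choose_spec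
    have := (actWalk_uniq (indAct Y) h1 hm (walk_map ψ (conv hw))).1
    rw [wordOf_map] at this
    have e : Y1.wordOf (Y.bdry f) = relatorWord g := (hP3.1 f).2
    rw [e] at this
    exact this.symm
  refine ⟨actC (indAct Y), actC_covering _ h1 hm hg,
    { mV := fun v => indMk Y v 1
      mE := fun e => (indMk Y (Y.src e) 1, Y.lab e)
      mF := fun f => indMk Y (hP3.1 f).1.choose 1
      hsrc := fun e => rfl
      hdst := hdst
      hlab := fun e => rfl
      hbdry := hb }, hV, hE, ?_⟩
  intro f f' h
  apply hP3.2
  have h2 := congrArg (actC (indAct Y)).bdry h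
  simp only [hb] at h2
  refine List.map_injective_iff.mpr ?_ h2
  rintro ⟨e, b⟩ ⟨e', b'⟩ hh
  simp only [Prod.mk.injEq] at hh
  exact Prod.ext (hE (Prod.ext hh.1.1 hh.1.2)) hh.2

end Proof

/-- intrinsic definition of a tiled surface.  For `g ≥ 2`, a
complex `Y` with directed labeled edges is a tiled surface — i.e. it embeds as a
subcomplex of a covering space of `Σ_g` compatibly with labels and directions —
if and only if it satisfies **P1**, **P2** and **P3**. -/
theorem statement_0 (g : ℕ) (hg : 2 ≤ g) (Y : Complex g) :
    Y.IsTiledSurface ↔ (Y.P1 ∧ Y.P2 ∧ Y.P3) := by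
  exact ⟨tiled_imp hg Y, fun h => imp_tiled hg Y h.1 h.2.1 h.2.2⟩

end CS

end
end

section
/- In every cyclic chain in a tiled surface, the number of blocks of even length is even. In particular, there is no cyclic chain consisting of a single block of length 2g, and no cyclic chain consisting of blocks of lengths 2g, 2g−1, 2g−1, …, 2g−1. -/
/-!
Formalization preamble for "Core Surfaces" (Magee–Puder).

We work with a fixed combinatorial (CW) model.  The surface `Σ_g` has one vertex,
`2g` directed labeled edges (the label `2i` plays the role of `a_{i+1}` and `2i+1`
the role of `b_{i+1}`), and one `4g`-gon glued along `[a₁,b₁]⋯[a_g,b_g]`.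

* `Gamma g` is the surface group, presented by the single relator.
* A `Complex g` is a combinatorial 2-complex with directed, labeled edges and
  2-cells given by their boundary walks; coverings of `Σ_g` are the complexes in
  which every vertex has exactly one incoming/outgoing edge of each label, every
  walk reading the relator is closed, and every closed walk reading the relator
  bounds exactly one face (`IsCovering`).  A tiled surface is a complex that
  embeds into such a covering (`IsTiledSurface`).
* Blocks, chains, boundary cycles (via the ribbon structure coming from the fixed
  cyclic order of the `4g` half-edges around a vertex of `Σ_g`), boundary-reduced
  and strongly boundary-reduced surfaces are defined combinatorially.
* Homotopy of edge-walks is the edge-path-group homotopy: backtrack insertions and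
  insertions of boundaries of (present) faces.
* `cover g J` is the covering space `J\~Σ_g` of `Σ_g` associated to a subgroup
  `J ≤ Γ_g` (vertices = right cosets), and `coreSub g J` is the core surface of
  `J`, defined exactly as in the paper: the union of all shortest representative
  cycles of essential free-homotopy classes, together with all components of the
  complement containing finitely many `4g`-gons.
-/

noncomputable section

namespace CS

theorem gap0_par {g : ℕ} (s t : Letter g) (h : gapN s t = 0) :
    ((s.1 : ℕ) + t.1) % 2 = 1 := by
  obtain ⟨⟨a, ha⟩, x⟩ := s
  obtain ⟨⟨b, hb⟩, y⟩ := t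
  have h2 : ∃ q, posLv (⟨b, hb⟩, y) + 4 * g - (posArr (⟨a, ha⟩, x) + 1) = 4 * g * q + 0 :=
    ⟨_, (Nat.div_add_mod _ _).symm.trans (congrArg _ h)⟩
  obtain ⟨q, h2⟩ := h2
  rw [mul_assoc] at h2
  generalize g * q = r at h2
  simp only [posLv, posArr, posOut, posIn] at h2 ⊢
  split_ifs at h2 <;> omega

theorem gap1_par {g : ℕ} (s t : Letter g) (h : gapN s t = 1) :
    ((s.1 : ℕ) + t.1) % 2 = 0 := by
  obtain ⟨⟨a, ha⟩, x⟩ := s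
  obtain ⟨⟨b, hb⟩, y⟩ := t
  have h2 : ∃ q, posLv (⟨b, hb⟩, y) + 4 * g - (posArr (⟨a, ha⟩, x) + 1) = 4 * g * q + 1 :=
    ⟨_, (Nat.div_add_mod _ _).symm.trans (congrArg _ h)⟩
  obtain ⟨q, h2⟩ := h2
  rw [mul_assoc] at h2
  generalize g * q = r at h2
  simp only [posLv, posArr, posOut, posIn] at h2 ⊢
  split_ifs at h2 <;> omega

theorem block_par {g : ℕ} (Y : Complex g) (l : List Y.D) :
    List.IsChain (fun d d' => Y.adj d d' ∧ gapN (Y.dLet d) (Y.dLet d') = 0) l →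
    ∀ d d', l.head? = some d → l.getLast? = some d' →
      ((Y.lab d.1 : ℕ) + Y.lab d'.1 + l.length + 1) % 2 = 0 := by
  induction l with
  | nil => intro _ d d' h; simp at h
  | cons x l ih =>
    intro hc d d' h h'
    cases l with
    | nil =>
      simp at h h'
      subst h; subst h'
      simp; omega
    | cons y l =>
      rw [List.isChain_cons_cons] at hc
      have h1 := gap0_par _ _ hc.1.2
      simp at h
      subst h
      rw [List.getLast?_cons_cons] at h'
      have := ih hc.2 y d' (by simp) h'
      simp only [Complex.dLet, List.length_cons] at *
      omega

theorem chain_par {g : ℕ} (Y : Complex g) (bs : List (List Y.D)) :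
    (∀ b ∈ bs, Y.IsBlock b) → List.IsChain Y.chainStep bs →
    ∀ b b' d d', bs.head? = some b → bs.getLast? = some b' →
      b.head? = some d → b'.getLast? = some d' →
      ((Y.lab d.1 : ℕ) + Y.lab d'.1 + bs.countP fun b => b.length % 2 == 0) % 2 = 0 := by
  induction bs with
  | nil => intro _ _ b b' d d' h; simp at h
  | cons x l ih =>
    intro hB hc b b' d d' h h' hd hd'
    have hx := hB x (by simp)
    simp at h
    subst h
    rw [List.countP_cons]
    cases l with
    | nil =>
      simp at h'
      subst h'
      have := block_par Y x hx.2.2 d d' hd hd'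
      simp only [List.countP_nil, beq_iff_eq]
      split_ifs <;> omega
    | cons y l =>
      rw [List.isChain_cons_cons] at hc
      obtain ⟨⟨e, e', he, he', _, hgap⟩, hc2⟩ := hc
      have h1 := gap1_par _ _ hgap
      rw [List.getLast?_cons_cons] at h'
      have h2 := ih (fun b hb => hB b (List.mem_cons_of_mem _ hb)) hc2 y b' e' d' (by simp) h' he' hd'
      have h3 := block_par Y x hx.2.2 d e hd he
      simp only [Complex.dLet, beq_iff_eq] at *
      split_ifs <;> omega

/-- In every cyclic chain in a tiled surface, the number of
blocks of even length is even.  In particular there is no cyclic chain consisting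
of a single block of length `2g`, and no cyclic chain with blocks of lengths
`2g, 2g−1, …, 2g−1`. -/
theorem statement_1 (g : ℕ) (hg : 2 ≤ g) (Y : Complex g) (hY : Y.IsTiledSurface)
    (bs : List (List Y.D)) (hbs : Y.IsCyclicChain bs) :
    Even (bs.countP fun b => b.length % 2 == 0) ∧
    bs.map List.length ≠ [2 * g] ∧
    ∀ k : ℕ, bs.map List.length ≠ 2 * g :: List.replicate k (2 * g - 1) := by
  have hE : Even (bs.countP fun b => b.length % 2 == 0) := by
    obtain ⟨⟨_, hB, hc⟩, b, b', hb, hb', d, d', hd, hd', _, hgap⟩ := hbs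
    have h1 := gap1_par _ _ hgap
    have h2 := chain_par Y bs hB hc b' b d' d hb' hb hd' hd
    simp only [Complex.dLet] at h1
    rw [Nat.even_iff]
    omega
  have key : ∀ k : ℕ, bs.map List.length ≠ 2 * g :: List.replicate k (2 * g - 1) := by
    intro k hk
    have h1 : (bs.countP fun b => b.length % 2 == 0)
        = (bs.map List.length).countP (fun n => n % 2 == 0) := by
      rw [List.countP_map]; rfl
    have h3 : (2 * g - 1) % 2 = 1 := by omega
    rw [h1, hk, List.countP_cons, List.countP_replicate] at hE
    simp [h3] at hE
  exact ⟨hE, by simpa using key 0, key⟩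

end CS

end
end

section
/- Let g ≥ 2 and let Y be an at-most two-dimensional CW-complex with an assignment of both a direction and a label in {a_1, …, b_g} to each edge, satisfying properties P1 and P3. If the thick version of Y (constructed combinatorially via the ribbon-graph structure induced by the cyclic ordering of half-edges inherited from Σ_g) is boundary reduced, then Y also satisfies property P2 and hence is a tiled surface. -/
/-!
Formalization preamble for "Core Surfaces" (Magee–Puder).

We work with a fixed combinatorial (CW) model.  The surface `Σ_g` has one vertex,
`2g` directed labeled edges (the label `2i` plays the role of `a_{i+1}` and `2i+1`
the role of `b_{i+1}`), and one `4g`-gon glued along `[a₁,b₁]⋯[a_g,b_g]`.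

* `Gamma g` is the surface group, presented by the single relator.
* A `Complex g` is a combinatorial 2-complex with directed, labeled edges and
  2-cells given by their boundary walks; coverings of `Σ_g` are the complexes in
  which every vertex has exactly one incoming/outgoing edge of each label, every
  walk reading the relator is closed, and every closed walk reading the relator
  bounds exactly one face (`IsCovering`).  A tiled surface is a complex that
  embeds into such a covering (`IsTiledSurface`).
* Blocks, chains, boundary cycles (via the ribbon structure coming from the fixed
  cyclic order of the `4g` half-edges around a vertex of `Σ_g`), boundary-reduced
  and strongly boundary-reduced surfaces are defined combinatorially.
* Homotopy of edge-walks is the edge-path-group homotopy: backtrack insertions and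
  insertions of boundaries of (present) faces.
* `cover g J` is the covering space `J\~Σ_g` of `Σ_g` associated to a subgroup
  `J ≤ Γ_g` (vertices = right cosets), and `coreSub g J` is the core surface of
  `J`, defined exactly as in the paper: the union of all shortest representative
  cycles of essential free-homotopy classes, together with all components of the
  complement containing finitely many `4g`-gons.
-/

noncomputable section

namespace CS

structure Sys (L : Type) where
  nx : Equiv.Perm L
  iv : L → L
  M : ℕ
  iviv : ∀ s, iv (iv s) = s
  hM : 4 ≤ M
  nxN : nx ^ (2 * M) = 1
  s1 : ∀ s, nx (iv s) ≠ s
  s2 : ∀ s, nx (iv (nx (iv s))) ≠ s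
  s3 : ∀ s, nx (iv (nx (iv (nx (iv s))))) ≠ s

section
variable {L W : Type} (S : Sys L)

/-- block path of length `k` -/
def Pth (R : W → L → W → Prop) : ℕ → W → L → W → Prop
  | 0, x, _, y => x = y
  | k + 1, x, s, z => ∃ y, R x s y ∧ Pth R k y (S.nx s) z

structure Okay (R : W → L → W → Prop) : Prop where
  symm : ∀ x s y, R x s y → R y (S.iv s) x
  det : ∀ x s y z, R x s y → R x s z → y = z
  clo : ∀ x s y, Pth S R (S.M + 1) x s y → Pth S R (2 * S.M) x s x

variable {S} {R : W → L → W → Prop}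

theorem nxp (k : ℕ) (s : L) : (S.nx ^ k) (S.nx s) = (S.nx ^ (k + 1)) s := by
  rw [pow_succ]; rfl

theorem nxp' (k : ℕ) (s : L) : S.nx ((S.nx ^ k) s) = (S.nx ^ (k + 1)) s := by
  rw [pow_succ']; rfl

theorem nxpp (j k : ℕ) (s : L) : (S.nx ^ j) ((S.nx ^ k) s) = (S.nx ^ (j + k)) s := by
  rw [pow_add]; rfl

theorem nxN' (s : L) : (S.nx ^ (2 * S.M)) s = s := by rw [S.nxN]; rfl

theorem pth_add (m n : ℕ) (x : W) (s : L) (z : W) :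
    Pth S R (m + n) x s z ↔ ∃ y, Pth S R m x s y ∧ Pth S R n y ((S.nx ^ m) s) z := by
  induction m generalizing x s with
  | zero => simp [Pth]
  | succ m ih =>
    rw [Nat.succ_add]
    simp only [Pth, ih, nxp]
    constructor
    · rintro ⟨y, h, w, h2, h3⟩; exact ⟨w, ⟨y, h, h2⟩, h3⟩
    · rintro ⟨w, ⟨y, h, h2⟩, h3⟩; exact ⟨y, h, w, h2, h3⟩

theorem pth_one (x : W) (s : L) (y : W) : Pth S R 1 x s y ↔ R x s y := by
  simp [Pth]

theorem pth_succ' (k : ℕ) (x : W) (s : L) (z : W) :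
    Pth S R (k + 1) x s z ↔ ∃ y, Pth S R k x s y ∧ R y ((S.nx ^ k) s) z := by
  simp [pth_add, pth_one]

theorem pth_mono {R' : W → L → W → Prop} (h : ∀ x s y, R x s y → R' x s y) (k : ℕ) (x : W)
    (s : L) (y : W) (hp : Pth S R k x s y) : Pth S R' k x s y := by
  induction k generalizing x s with
  | zero => exact hp
  | succ k ih => obtain ⟨w, h1, h2⟩ := hp; exact ⟨w, h _ _ _ h1, ih _ _ h2⟩

section
variable (hs : ∀ x s y, R x s y → R y (S.iv s) x) (hd : ∀ x s y z, R x s y → R x s z → y = z)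
include hs hd

theorem codet {x x' y : W} {s : L} (h : R x s y) (h' : R x' s y) : x = x' :=
  hd _ _ _ _ (hs _ _ _ h) (hs _ _ _ h')

omit hs in
theorem pth_det {k : ℕ} {x y y' : W} {s : L} (h : Pth S R k x s y) (h' : Pth S R k x s y') :
    y = y' := by
  induction k generalizing x s with
  | zero => exact Eq.trans (Eq.symm h) h'
  | succ k ih =>
    obtain ⟨w, h1, h2⟩ := h
    obtain ⟨w', h1', h2'⟩ := h'
    obtain rfl := hd _ _ _ _ h1 h1'
    exact ih h2 h2'

theorem pth_codet {k : ℕ} {x x' y : W} {s : L} (h : Pth S R k x s y) (h' : Pth S R k x' s y) :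
    x = x' := by
  induction k generalizing x x' s with
  | zero => exact Eq.trans h (Eq.symm h')
  | succ k ih =>
    obtain ⟨w, h1, h2⟩ := h
    obtain ⟨w', h1', h2'⟩ := h'
    obtain rfl := ih h2 h2'
    exact codet hs hd h1 h1'

omit hs in
theorem good_fwd {u v : W} {s : L} (h : R u s v) (hg : Pth S R (2 * S.M) u s u) :
    Pth S R (2 * S.M) v (S.nx s) v := by
  have hM := S.hM
  obtain ⟨n, hn⟩ : ∃ n, 2 * S.M = n + 1 := ⟨2 * S.M - 1, by omega⟩
  have hN := nxN' (S := S) s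
  rw [hn] at hg hN ⊢
  obtain ⟨w, h1, h2⟩ := hg
  obtain rfl := hd _ _ _ _ h h1
  rw [pth_succ']
  refine ⟨u, h2, ?_⟩
  rw [nxp, hN]; exact h

theorem good_bwd {u v : W} {s : L} (h : R u s v) (hg : Pth S R (2 * S.M) v (S.nx s) v) :
    Pth S R (2 * S.M) u s u := by
  have hM := S.hM
  obtain ⟨n, hn⟩ : ∃ n, 2 * S.M = n + 1 := ⟨2 * S.M - 1, by omega⟩
  have hN := nxN' (S := S) s
  rw [hn] at hg hN ⊢
  rw [pth_succ'] at hg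
  obtain ⟨w, h1, h2⟩ := hg
  rw [nxp, hN] at h2
  obtain rfl := codet hs hd h h2
  exact ⟨v, h, h1⟩

omit hs in
theorem good_pth {k : ℕ} {u v : W} {s : L} (h : Pth S R k u s v)
    (hg : Pth S R (2 * S.M) u s u) : Pth S R (2 * S.M) v ((S.nx ^ k) s) v := by
  induction k generalizing u s with
  | zero => obtain rfl := h; simpa using hg
  | succ k ih =>
    obtain ⟨w, h1, h2⟩ := h
    rw [← nxp]
    exact ih h2 (good_fwd hd h1 hg)

theorem good_pth_bwd {k : ℕ} {u v : W} {s : L} (h : Pth S R k u s v)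
    (hg : Pth S R (2 * S.M) v ((S.nx ^ k) s) v) : Pth S R (2 * S.M) u s u := by
  induction k generalizing u s with
  | zero => obtain rfl := h; simpa using hg
  | succ k ih =>
    obtain ⟨w, h1, h2⟩ := h
    rw [← nxp] at hg
    exact good_bwd hs hd h1 (ih h2 hg)

end

/-! ### the layer step -/

def Miss (X : Set W) (R : W → L → W → Prop) (x : W) (q : L) : Prop := x ∈ X ∧ ∀ y, ¬ R x q y

variable (S) in
structure Conn (X : Set W) (R : W → L → W → Prop) (x : W) (q : L) (b : ℕ) (y : W) : Prop where
  mx : Miss X R x q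
  my : Miss X R y ((S.nx ^ (b + 1)) (S.iv q))
  p : Pth S R b x (S.nx (S.iv q)) y
  hb : b ≤ S.M

section
variable {X : Set W} (ok : Okay S R) (hX : ∀ x s y, R x s y → x ∈ X ∧ y ∈ X)
include ok

theorem conn_det_le {x : W} {q : L} {b b' : ℕ} {y y' : W} (h : Conn S X R x q b y)
    (h' : Conn S X R x q b' y') (hl : b ≤ b') : b = b' ∧ y = y' := by
  obtain ⟨c, rfl⟩ := Nat.exists_eq_add_of_le hl
  have hp := h'.p
  rw [pth_add] at hp
  obtain ⟨z, h1, h2⟩ := hp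
  obtain rfl := pth_det ok.det h.p h1
  cases c with
  | zero => exact ⟨rfl, h2⟩
  | succ c =>
    obtain ⟨w, h3, _⟩ := h2
    rw [nxp] at h3
    exact absurd h3 (h.my.2 _)

theorem conn_det {x : W} {q : L} {b b' : ℕ} {y y' : W} (h : Conn S X R x q b y)
    (h' : Conn S X R x q b' y') : b = b' ∧ y = y' := by
  rcases le_total b b' with hl | hl
  · exact conn_det_le ok h h' hl
  · obtain ⟨h1, h2⟩ := conn_det_le ok h' h hl
    exact ⟨h1.symm, h2.symm⟩

theorem conn_codet_le {x x' : W} {q q' : L} {b b' : ℕ} {y : W} (h : Conn S X R x q b y)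
    (h' : Conn S X R x' q' b' y)
    (e : (S.nx ^ (b + 1)) (S.iv q) = (S.nx ^ (b' + 1)) (S.iv q')) (hl : b ≤ b') :
    b = b' ∧ x = x' ∧ q = q' := by
  obtain ⟨c, rfl⟩ := Nat.exists_eq_add_of_le hl
  have e2 : S.iv q = (S.nx ^ c) (S.iv q') := by
    apply (S.nx ^ (b + 1)).injective
    rw [e, nxpp]; congr 2; omega
  have hp := h'.p
  rw [Nat.add_comm, pth_add] at hp
  obtain ⟨z, h1, h2⟩ := hp
  rw [nxp, ← nxp', ← e2] at h2
  obtain rfl := pth_codet ok.symm ok.det h.p h2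
  cases c with
  | zero =>
    refine ⟨rfl, Eq.symm h1, ?_⟩
    have : S.iv q = S.iv q' := by simpa using e2
    rw [← S.iviv q, this, S.iviv]
  | succ c =>
    rw [pth_succ'] at h1
    obtain ⟨w, _, h3⟩ := h1
    rw [nxp, ← e2] at h3
    have := ok.symm _ _ _ h3
    rw [S.iviv] at this
    exact absurd this (h.mx.2 _)

theorem conn_codet {x x' : W} {q q' : L} {b b' : ℕ} {y : W} (h : Conn S X R x q b y)
    (h' : Conn S X R x' q' b' y)
    (e : (S.nx ^ (b + 1)) (S.iv q) = (S.nx ^ (b' + 1)) (S.iv q')) :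
    b = b' ∧ x = x' ∧ q = q' := by
  rcases le_total b b' with hl | hl
  · exact conn_codet_le ok h h' e hl
  · obtain ⟨h1, h2, h3⟩ := conn_codet_le ok h' h e.symm hl
    exact ⟨h1.symm, h2.symm, h3.symm⟩

include hX

theorem conn_fwd {x : W} {q : L} (hm : Miss X R x q) : ∃ b y, Conn S X R x q b y := by
  have hM := S.hM
  have key : ¬ ∃ y, Pth S R (S.M + 1) x (S.nx (S.iv q)) y := by
    rintro ⟨y, hy⟩
    have hg := ok.clo _ _ _ hy
    obtain ⟨n, hn⟩ : ∃ n, 2 * S.M = n + 1 := ⟨2 * S.M - 1, by omega⟩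
    have hN := nxN' (S := S) (S.iv q)
    rw [hn] at hg hN
    rw [pth_succ'] at hg
    obtain ⟨w, h1, h2⟩ := hg
    rw [nxp, hN] at h2
    have := ok.symm _ _ _ h2
    rw [S.iviv] at this
    exact hm.2 _ this
  classical
  let P : ℕ → Prop := fun k => ¬ ∃ y, Pth S R k x (S.nx (S.iv q)) y
  have hex : ∃ k, P k := ⟨_, key⟩
  have hk := Nat.find_spec hex
  have hmin := fun k => Nat.find_min (m := k) hex
  have hle := Nat.find_le (h := hex) key
  generalize Nat.find hex = k at *
  cases k with
  | zero => exact absurd ⟨x, rfl⟩ hk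
  | succ b =>
    have := hmin b (by omega)
    simp only [P, not_not] at this
    obtain ⟨y, hy⟩ := this
    refine ⟨b, y, hm, ⟨?_, ?_⟩, hy, by omega⟩
    · cases b with
      | zero => obtain rfl := hy; exact hm.1
      | succ b =>
        rw [pth_succ'] at hy
        obtain ⟨w, _, h2⟩ := hy
        exact (hX _ _ _ h2).2
    · intro z hz
      apply hk
      refine ⟨z, ?_⟩
      rw [pth_succ']
      exact ⟨y, hy, by rwa [nxp]⟩

theorem conn_bwd {y : W} {r : L} (hm : Miss X R y r) :
    ∃ x q b, Conn S X R x q b y ∧ (S.nx ^ (b + 1)) (S.iv q) = r := by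
  have hM := S.hM
  classical
  let P : ℕ → Prop := fun k => ¬ ∃ u s, Pth S R k u s y ∧ (S.nx ^ k) s = r
  have key : P (S.M + 1) := by
    rintro ⟨u, s, h1, h2⟩
    have hg := ok.clo _ _ _ h1
    have := good_pth ok.det h1 hg
    rw [h2] at this
    obtain ⟨n, hn⟩ : ∃ n, 2 * S.M = n + 1 := ⟨2 * S.M - 1, by omega⟩
    rw [hn] at this
    obtain ⟨w, h3, _⟩ := this
    exact hm.2 _ h3
  have hex : ∃ k, P k := ⟨_, key⟩
  have hk := Nat.find_spec hex
  have hmin := fun k => Nat.find_min (m := k) hex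
  have hle := Nat.find_le (h := hex) key
  generalize Nat.find hex = k at *
  cases k with
  | zero => exact absurd ⟨y, r, rfl, rfl⟩ hk
  | succ b =>
    have := hmin b (by omega)
    simp only [P, not_not] at this
    obtain ⟨u, s, hy, hr⟩ := this
    have e : S.nx (S.iv (S.iv (S.nx.symm s))) = s := by rw [S.iviv]; simp
    refine ⟨u, S.iv (S.nx.symm s), b, ⟨⟨?_, ?_⟩, ⟨hm.1, ?_⟩, ?_, by omega⟩, ?_⟩
    · cases b with
      | zero => obtain rfl := hy; exact hm.1
      | succ b =>
        obtain ⟨w, h2, _⟩ := hy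
        exact (hX _ _ _ h2).1
    · intro z hz
      apply hk
      have hz' := ok.symm _ _ _ hz
      rw [S.iviv] at hz'
      refine ⟨z, S.nx.symm s, ⟨u, hz', by simpa using hy⟩, ?_⟩
      rw [← nxp]; simpa using hr
    · rw [← nxp, e, hr]; exact hm.2
    · rw [e]; exact hy
    · rw [← nxp, e, hr]

end

variable (S) in
inductive Fw (X : Set W) (R : W → L → W → Prop) (nw : W → L → ℕ → W) : W → L → W → Prop
  | hin (x : W) (q : L) : Miss X R x q → Fw X R nw (nw x q 0) (S.iv q) x
  | mid (x : W) (q : L) (b : ℕ) (y : W) (i : ℕ) : Conn S X R x q b y → i + 1 < 2 * S.M - 2 - b →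
      Fw X R nw (nw x q (i + 1)) ((S.nx ^ (2 * S.M - (i + 1))) (S.iv q)) (nw x q i)
  | last (x : W) (q : L) (b : ℕ) (y : W) : Conn S X R x q b y →
      Fw X R nw (nw y ((S.nx ^ (b + 1)) (S.iv q)) 0) ((S.nx ^ (b + 2)) (S.iv q))
        (nw x q (2 * S.M - 3 - b))

variable (S) in
def Rn (X : Set W) (R : W → L → W → Prop) (nw : W → L → ℕ → W) (u : W) (s : L) (v : W) : Prop :=
  R u s v ∨ Fw S X R nw u s v ∨ Fw S X R nw v (S.iv s) u

section
variable {X : Set W} {nw : W → L → ℕ → W} (ok : Okay S R)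
  (hX : ∀ x s y, R x s y → x ∈ X ∧ y ∈ X)
  (hf : ∀ x q i, nw x q i ∉ X)
  (hi : ∀ x q i x' q' i', nw x q i = nw x' q' i' → x = x' ∧ q = q' ∧ i = i')

include ok in
theorem Rn_symm (u : W) (s : L) (v : W) (h : Rn S X R nw u s v) : Rn S X R nw v (S.iv s) u := by
  rcases h with h | h | h
  · exact .inl (ok.symm _ _ _ h)
  · exact .inr (.inr (by rwa [S.iviv]))
  · exact .inr (.inl h)

theorem Rn_complete (x : W) (hx : x ∈ X) (q : L) : ∃ y, Rn S X R nw x q y := by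
  by_cases h : ∃ y, R x q y
  · obtain ⟨y, hy⟩ := h; exact ⟨y, .inl hy⟩
  · push Not at h
    exact ⟨nw x q 0, .inr (.inr (.hin _ _ ⟨hx, h⟩))⟩

variable (S X R nw) in
inductive Out (x : W) (q : L) (i : ℕ) (s : L) (v : W) : Prop
  | A : Miss X R x q → i = 0 → s = S.iv q → v = x → Out x q i s v
  | B (j b : ℕ) (y : W) : Conn S X R x q b y → i < 2 * S.M - 2 - b → i = j + 1 → s = (S.nx ^ (2 * S.M - i)) (S.iv q) → i < 2 * S.M → v = nw x q j →
      Out x q i s v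
  | C (x' : W) (q' : L) (b : ℕ) : i = 0 → Conn S X R x' q' b x →
      (S.nx ^ (b + 1)) (S.iv q') = q → s = S.nx q → v = nw x' q' (2 * S.M - 3 - b) →
      Out x q i s v
  | D1 (b : ℕ) (y : W) : Conn S X R x q b y → i + 1 < 2 * S.M - 2 - b →
      s = S.iv ((S.nx ^ (2 * S.M - (i + 1))) (S.iv q)) → v = nw x q (i + 1) → Out x q i s v
  | D2 (b : ℕ) (y : W) : Conn S X R x q b y → i + 1 = 2 * S.M - 2 - b →
      s = S.iv ((S.nx ^ (2 * S.M - (i + 1))) (S.iv q)) →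
      v = nw y ((S.nx ^ (b + 1)) (S.iv q)) 0 → Out x q i s v

include hX hf hi in
theorem out_of {x : W} {q : L} {i : ℕ} {s : L} {v : W} (h : Rn S X R nw (nw x q i) s v) :
    Out S R X nw x q i s v := by
  have hM := S.hM
  rcases h with h | h | h
  · exact absurd (hX _ _ _ h).1 (hf _ _ _)
  · generalize hu : nw x q i = u at h
    cases h with
    | hin x' q' hm =>
      obtain ⟨rfl, rfl, rfl⟩ := hi _ _ _ _ _ _ hu
      exact .A hm rfl rfl rfl
    | mid x' q' b y j hc hj =>
      obtain ⟨rfl, rfl, rfl⟩ := hi _ _ _ _ _ _ hu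
      exact .B j b y hc hj rfl rfl (by omega) rfl
    | last x' q' b y hc =>
      obtain ⟨rfl, rfl, rfl⟩ := hi _ _ _ _ _ _ hu
      exact .C _ _ b rfl hc rfl (by rw [nxp']) rfl
  · generalize hu : nw x q i = u at h
    generalize ht : S.iv s = t at h
    have hs : s = S.iv t := by rw [← ht, S.iviv]
    cases h with
    | hin x' q' hm =>
      exact absurd (hu ▸ hm.1) (hf _ _ _)
    | mid x' q' b y j hc hj =>
      obtain ⟨rfl, rfl, rfl⟩ := hi _ _ _ _ _ _ hu
      exact .D1 b y hc hj hs rfl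
    | last x' q' b y hc =>
      obtain ⟨rfl, rfl, rfl⟩ := hi _ _ _ _ _ _ hu
      have := hc.hb
      refine .D2 b y hc (by omega) ?_ rfl
      rw [hs]; congr 3; omega

include hf in
theorem old_of {x : W} (hx : x ∈ X) {q : L} {v : W} (h : Rn S X R nw x q v) :
    R x q v ∨ (Miss X R x q ∧ v = nw x q 0) := by
  rcases h with h | h | h
  · exact .inl h
  · cases h with
    | hin x' q' hm => exact absurd hx (hf _ _ _)
    | mid x' q' b y j hc hj => exact absurd hx (hf _ _ _)
    | last x' q' b y hc => exact absurd hx (hf _ _ _)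
  · generalize ht : S.iv q = t at h
    cases h with
    | hin x' q' hm =>
      have : q = q' := by rw [← S.iviv q, ht, S.iviv]
      subst this
      exact .inr ⟨hm, rfl⟩
    | mid x' q' b y j hc hj => exact absurd hx (hf _ _ _)
    | last x' q' b y hc => exact absurd hx (hf _ _ _)

theorem src_of {u : W} {q : L} {v : W} (hX : ∀ x s y, R x s y → x ∈ X ∧ y ∈ X)
    (h : Rn S X R nw u q v) : u ∈ X ∨ ∃ x q i, u = nw x q i := by
  rcases h with h | h | h
  · exact .inl (hX _ _ _ h).1
  · cases h <;> exact .inr ⟨_, _, _, rfl⟩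
  · generalize ht : S.iv q = t at h
    cases h with
    | hin x' q' hm => exact .inl hm.1
    | mid x' q' b y j hc hj => exact .inr ⟨_, _, _, rfl⟩
    | last x' q' b y hc => exact .inr ⟨_, _, _, rfl⟩

theorem pw_lt {c : L} {i : ℕ} (h : i + 1 ≤ 2 * S.M) :
    S.nx ((S.nx ^ (2 * S.M - (i + 1))) c) = (S.nx ^ (2 * S.M - i)) c := by
  rw [nxp']; congr 2; omega

/-- the letter of a reversed outer edge -/
theorem pw_ne1 {c : L} {i : ℕ} (h : i + 1 ≤ 2 * S.M) :
    (S.nx ^ (2 * S.M - i)) c ≠ S.iv ((S.nx ^ (2 * S.M - (i + 1))) c) := by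
  rw [← pw_lt h]
  intro e
  apply S.s1 (S.iv ((S.nx ^ (2 * S.M - (i + 1))) c))
  rw [S.iviv]; exact e

theorem pw_ne0 {c : L} (h : 1 ≤ 2 * S.M) :
    c ≠ S.iv ((S.nx ^ (2 * S.M - (0 + 1))) c) := by
  have := pw_ne1 (S := S) (c := c) (i := 0) h
  rwa [Nat.sub_zero, nxN'] at this

theorem pw_ne2 {q : L} (h : 1 ≤ 2 * S.M) :
    S.nx q ≠ S.iv ((S.nx ^ (2 * S.M - (0 + 1))) (S.iv q)) := by
  have e := pw_lt (S := S) (c := S.iv q) (i := 0) h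
  rw [Nat.sub_zero, nxN'] at e
  generalize (S.nx ^ (2 * S.M - (0 + 1))) (S.iv q) = z at *
  intro e2
  apply S.s2 (S.iv z)
  rw [S.iviv, e, S.iviv, e2]

include ok hX hf hi in
theorem Rn_det (u : W) (s : L) (v v' : W) (h : Rn S X R nw u s v) (h' : Rn S X R nw u s v') :
    v = v' := by
  have hM := S.hM
  rcases src_of hX h with hu | ⟨x, q, i, rfl⟩
  · rcases old_of hf hu h with h1 | ⟨h1, rfl⟩ <;> rcases old_of hf hu h' with h2 | ⟨h2, rfl⟩
    · exact ok.det _ _ _ _ h1 h2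
    · exact absurd h1 (h2.2 _)
    · exact absurd h2 (h1.2 _)
    · rfl
  · have hne : S.iv q ≠ S.nx q := by
      intro e
      apply S.s1 (S.iv q); rw [S.iviv, e]
    rcases out_of hX hf hi h with ⟨hmm, hi0, hs, hv⟩ | ⟨j, b, y, hc, hltb, hij, hs, hlt, hv⟩ |
      ⟨x', q', b, hi0, hc, hq, hs, hv⟩ | ⟨b, y, hc, hlt, hs, hv⟩ | ⟨b, y, hc, hlt, hs, hv⟩ <;>
    rcases out_of hX hf hi h' with ⟨hmm', hi0', hs', hv'⟩ | ⟨j', b', y', hc', hltb', hij', hs', hlt', hv'⟩ |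
      ⟨x'', q'', b', hi0', hc', hq', hs', hv'⟩ | ⟨b', y', hc', hlt', hs', hv'⟩ |
      ⟨b', y', hc', hlt', hs', hv'⟩ <;> subst hv <;> subst hv' <;> try omega
    · rfl
    · exact absurd (hs.symm.trans hs') hne
    · subst hi0; exact absurd (hs.symm.trans hs') (pw_ne0 (by omega))
    · subst hi0; exact absurd (hs.symm.trans hs') (pw_ne0 (by omega))
    · obtain rfl : j = j' := by omega
      rfl
    · exact absurd (hs.symm.trans hs') (pw_ne1 (by omega))
    · exact absurd (hs.symm.trans hs') (pw_ne1 (by omega))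
    · exact absurd (hs'.symm.trans hs) hne
    · obtain ⟨rfl, rfl, rfl⟩ := conn_codet ok hc hc' (hq.trans hq'.symm)
      rfl
    · subst hi0; exact absurd (hs.symm.trans hs') (pw_ne2 (by omega))
    · subst hi0; exact absurd (hs.symm.trans hs') (pw_ne2 (by omega))
    · subst hi0'; exact absurd (hs'.symm.trans hs) (pw_ne0 (by omega))
    · exact absurd (hs'.symm.trans hs) (pw_ne1 (by omega))
    · subst hi0'; exact absurd (hs'.symm.trans hs) (pw_ne2 (by omega))
    · rfl
    · obtain ⟨rfl, rfl⟩ := conn_det ok hc hc'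
      omega
    · subst hi0'; exact absurd (hs'.symm.trans hs) (pw_ne0 (by omega))
    · exact absurd (hs'.symm.trans hs) (pw_ne1 (by omega))
    · subst hi0'; exact absurd (hs'.symm.trans hs) (pw_ne2 (by omega))
    · obtain ⟨rfl, rfl⟩ := conn_det ok hc hc'
      omega
    · obtain ⟨rfl, rfl⟩ := conn_det ok hc hc'
      rfl

theorem Rn_le (x : W) (s : L) (y : W) (h : R x s y) : Rn S X R nw x s y := .inl h

/-- the polygon -/
theorem outer_path {x : W} {q : L} {b : ℕ} {y : W} (hc : Conn S X R x q b y) (i : ℕ)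
    (hl : i < 2 * S.M - 2 - b) :
    Pth S (Rn S X R nw) i (nw x q i) ((S.nx ^ (2 * S.M - i)) (S.iv q)) (nw x q 0) := by
  induction i with
  | zero => rfl
  | succ i ih =>
    refine ⟨nw x q i, .inr (.inl (.mid _ _ _ _ _ hc hl)), ?_⟩
    rw [pw_lt (by omega)]
    exact ih (by omega)

theorem polygon {x : W} {q : L} {b : ℕ} {y : W} (hc : Conn S X R x q b y) :
    Pth S (Rn S X R nw) (2 * S.M) (nw x q 0) (S.iv q) (nw x q 0) := by
  have hM := S.hM
  have hb := hc.hb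
  have e : 2 * S.M = (b + (1 + (1 + (2 * S.M - 3 - b)))) + 1 := by omega
  rw [e]
  refine ⟨x, .inr (.inl (.hin _ _ hc.mx)), ?_⟩
  rw [pth_add]
  refine ⟨y, pth_mono Rn_le _ _ _ _ hc.p, ?_⟩
  rw [pth_add]
  refine ⟨nw y ((S.nx ^ (b + 1)) (S.iv q)) 0, ?_, ?_⟩
  · rw [pth_one, nxp]
    exact .inr (.inr (.hin _ _ hc.my))
  rw [pth_add]
  refine ⟨nw x q (2 * S.M - 3 - b), ?_, ?_⟩
  · rw [pth_one, nxp, nxpp, Nat.add_comm 1 (b + 1)]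
    exact .inr (.inl (.last _ _ _ _ hc))
  · rw [nxp, nxpp, nxpp]
    have := outer_path (nw := nw) hc (2 * S.M - 3 - b) (by omega)
    convert this using 3
    omega

include ok hX hf hi in
theorem outer_good {x : W} {q : L} {b : ℕ} {y : W} (hc : Conn S X R x q b y) (i : ℕ)
    (hl : i < 2 * S.M - 2 - b) :
    Pth S (Rn S X R nw) (2 * S.M) (nw x q i) ((S.nx ^ (2 * S.M - i)) (S.iv q)) (nw x q i) := by
  have hp := polygon (nw := nw) hc
  apply good_pth_bwd (Rn_symm ok) (Rn_det ok hX hf hi) (outer_path hc i hl)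
  rw [nxpp, show i + (2 * S.M - i) = 2 * S.M by omega, nxN']
  exact hp

/-- reversed outer darts -/
def Orev (X : Set W) (R : W → L → W → Prop) (S : Sys L) (nw : W → L → ℕ → W)
    (x : W) (q : L) (i : ℕ) (s : L) (v : W) : Prop :=
  ∃ b y, Conn S X R x q b y ∧ s = S.iv ((S.nx ^ (2 * S.M - (i + 1))) (S.iv q)) ∧
    ((i + 1 < 2 * S.M - 2 - b ∧ v = nw x q (i + 1)) ∨
     (i + 1 = 2 * S.M - 2 - b ∧ v = nw y ((S.nx ^ (b + 1)) (S.iv q)) 0))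

include ok hX hf hi in
theorem trich {u : W} {s : L} {v : W} (h : Rn S X R nw u s v) :
    R u s v ∨ Pth S (Rn S X R nw) (2 * S.M) u s u ∨
      ∃ x q i, u = nw x q i ∧ Orev X R S nw x q i s v := by
  have hM := S.hM
  have hs' := Rn_symm (nw := nw) (X := X) ok
  have hd := Rn_det ok hX hf hi
  rcases src_of hX h with hu | ⟨x, q, i, rfl⟩
  · rcases old_of hf hu h with h1 | ⟨h1, rfl⟩
    · exact .inl h1
    · right; left
      obtain ⟨x, q, b, hc, rfl⟩ := conn_bwd ok hX h1
      have hp := polygon (nw := nw) hc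
      have h2 : Pth S (Rn S X R nw) (b + 1) (nw x q 0) (S.iv q) u :=
        ⟨x, .inr (.inl (.hin _ _ hc.mx)), pth_mono Rn_le _ _ _ _ hc.p⟩
      exact good_pth hd h2 hp
  · rcases out_of hX hf hi h with ⟨hmm, hi0, hs, hv⟩ | ⟨j, b, y, hc, hltb, hij, hs, hlt, hv⟩ |
      ⟨x', q', b, hi0, hc, hq, hs, hv⟩ | ⟨b, y, hc, hlt, hs, hv⟩ | ⟨b, y, hc, hlt, hs, hv⟩
    · subst hi0 hs hv
      right; left
      obtain ⟨b, y, hc⟩ := conn_fwd ok hX hmm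
      exact polygon hc
    · subst hs
      exact .inr (.inl (outer_good ok hX hf hi hc i hltb))
    · right; left
      have hb := hc.hb
      refine good_bwd hs' hd h ?_
      subst hs hv hq
      have := outer_good ok hX hf hi hc (2 * S.M - 3 - b) (by omega)
      rw [nxp', nxp']
      convert this using 3
      omega
    · exact .inr (.inr ⟨x, q, i, rfl, b, y, hc, hs, .inl ⟨hlt, hv⟩⟩)
    · exact .inr (.inr ⟨x, q, i, rfl, b, y, hc, hs, .inr ⟨hlt, hv⟩⟩)

include hi in
theorem orev_orev {x : W} {q : L} {i : ℕ} {s : L} {x' : W} {q' : L} {i' : ℕ} {w : W}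
    (h : Orev X R S nw x q i s (nw x' q' i')) (h' : Orev X R S nw x' q' i' (S.nx s) w) : False := by
  have hM := S.hM
  obtain ⟨b, y, hc, hs, h⟩ := h
  obtain ⟨b', y', hc', hs', h'⟩ := h'
  have hb := hc.hb
  have hb' := hc'.hb
  rcases h with ⟨hl, hv⟩ | ⟨hl, hv⟩
  · obtain ⟨rfl, rfl, rfl⟩ := hi _ _ _ _ _ _ hv
    have e := pw_lt (S := S) (c := S.iv q') (i := i + 1) (by omega)
    generalize (S.nx ^ (2 * S.M - (i + 1 + 1))) (S.iv q') = z at *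
    apply S.s2 (S.iv z)
    rw [S.iviv, e, ← hs, hs']
  · obtain ⟨rfl, rfl, rfl⟩ := hi _ _ _ _ _ _ hv
    have e0 : (S.nx ^ (2 * S.M - (i + 1))) (S.iv q) = S.nx ((S.nx ^ (b + 1)) (S.iv q)) := by
      rw [nxp']; congr 2; omega
    rw [e0] at hs
    generalize (S.nx ^ (b + 1)) (S.iv q) = r at *
    have e := pw_lt (S := S) (c := S.iv r) (i := 0) (by omega)
    rw [Nat.sub_zero, nxN'] at e
    generalize (S.nx ^ (2 * S.M - (0 + 1))) (S.iv r) = z at *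
    apply S.s3 (S.iv z)
    rw [S.iviv, e, S.iviv, ← hs, hs']

include hf in
theorem orev_not_old {x : W} {q : L} {i : ℕ} {s : L} {v : W}
    (h : Orev X R S nw x q i s v) : v ∉ X := by
  obtain ⟨b, y, hc, hs, ⟨_, rfl⟩ | ⟨_, rfl⟩⟩ := h <;> exact hf _ _ _

include ok hX hf hi in
/-- a path of length at least two is either old or extends to a polygon -/
theorem path_alt (k : ℕ) {u : W} {s : L} {v : W} (h : Pth S (Rn S X R nw) (k + 2) u s v) :
    Pth S R (k + 2) u s v ∨ Pth S (Rn S X R nw) (2 * S.M) u s u := by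
  have hs := Rn_symm (nw := nw) (X := X) ok
  have hd := Rn_det ok hX hf hi
  have corner : ∀ {u s v w}, Rn S X R nw u s v → Rn S X R nw v (S.nx s) w →
      (R u s v ∧ R v (S.nx s) w) ∨ Pth S (Rn S X R nw) (2 * S.M) u s u := by
    intro u s v w h1 h2
    rcases trich ok hX hf hi h1 with a | a | ⟨x, q, i, rfl, a⟩
    · rcases trich ok hX hf hi h2 with c | c | ⟨x, q, i, rfl, c⟩
      · exact .inl ⟨a, c⟩
      · exact .inr (good_bwd hs hd h1 c)
      · exact absurd (hX _ _ _ a).2 (hf _ _ _)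
    · exact .inr a
    · rcases trich ok hX hf hi h2 with c | c | ⟨x', q', i', rfl, c⟩
      · exact absurd (hX _ _ _ c).1 (orev_not_old hf a)
      · exact .inr (good_bwd hs hd h1 c)
      · exact (orev_orev hi a c).elim
  induction k generalizing u s with
  | zero =>
    obtain ⟨w, h1, z, h2, h3⟩ := h
    rcases corner h1 h2 with ⟨a, c⟩ | a
    · exact .inl ⟨w, a, z, c, h3⟩
    · exact .inr a
  | succ k ih =>
    obtain ⟨w, h1, h2⟩ := h
    have h2' := h2
    obtain ⟨z, h3, h4⟩ := h2'
    rcases corner h1 h3 with ⟨a, c⟩ | a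
    · rcases ih h2 with d | d
      · exact .inl ⟨w, a, d⟩
      · exact .inr (good_bwd hs hd h1 d)
    · exact .inr a

include ok hX hf hi in
theorem Rn_ok : Okay S (Rn S X R nw) where
  symm := Rn_symm ok
  det := Rn_det ok hX hf hi
  clo := by
    intro x s y h
    have hM := S.hM
    have e : S.M + 1 = (S.M - 1) + 2 := by omega
    rw [e] at h
    rcases path_alt ok hX hf hi _ h with h | h
    · rw [← e] at h
      exact pth_mono Rn_le _ _ _ _ (ok.clo _ _ _ h)
    · exact h

theorem fw_supp {u : W} {s : L} {v : W} (h : Fw S X R nw u s v) :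
    (u ∈ X ∨ ∃ x q i, u = nw x q i) ∧ (v ∈ X ∨ ∃ x q i, v = nw x q i) := by
  cases h with
  | hin x q hm => exact ⟨.inr ⟨_, _, _, rfl⟩, .inl hm.1⟩
  | mid => exact ⟨.inr ⟨_, _, _, rfl⟩, .inr ⟨_, _, _, rfl⟩⟩
  | last => exact ⟨.inr ⟨_, _, _, rfl⟩, .inr ⟨_, _, _, rfl⟩⟩

include hX in
theorem Rn_supp {u : W} {s : L} {v : W} (h : Rn S X R nw u s v) :
    (u ∈ X ∨ ∃ x q i, u = nw x q i) ∧ (v ∈ X ∨ ∃ x q i, v = nw x q i) := by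
  rcases h with h | h | h
  · exact ⟨.inl (hX _ _ _ h).1, .inl (hX _ _ _ h).2⟩
  · exact fw_supp h
  · exact (fw_supp h).symm

end

/-! ### the tower -/

inductive Wt (V L : Type) : Type
  | base : V → Wt V L
  | nw : ℕ → Wt V L → L → ℕ → Wt V L

def Wt.rank {V L : Type} : Wt V L → ℕ
  | .base _ => 0
  | .nw n _ _ _ => n + 1

variable (S) in
def tow {V : Type} (R0 : V → L → V → Prop) : ℕ → Wt V L → L → Wt V L → Prop
  | 0 => fun x s y => ∃ u v, x = .base u ∧ y = .base v ∧ R0 u s v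
  | n + 1 => Rn S {x | x.rank ≤ n} (tow R0 n) (Wt.nw n)

theorem tow_zero_pth {V : Type} {R0 : V → L → V → Prop} (k : ℕ) (u : V) (s : L) (z : Wt V L) :
    Pth S (tow S R0 0) k (.base u) s z ↔ ∃ v, z = .base v ∧ Pth S R0 k u s v := by
  induction k generalizing u s with
  | zero => simp [Pth, eq_comm]
  | succ k ih =>
    constructor
    · rintro ⟨y, ⟨u', v, e1, rfl, h⟩, h2⟩
      cases e1
      obtain ⟨w, rfl, h3⟩ := (ih _ _).1 h2
      exact ⟨w, rfl, v, h, h3⟩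
    · rintro ⟨v, rfl, w, h, h2⟩
      exact ⟨.base w, ⟨u, w, rfl, rfl, h⟩, (ih _ _).2 ⟨v, rfl, h2⟩⟩

theorem tow_ok {V : Type} {R0 : V → L → V → Prop} (ok : Okay S R0) (n : ℕ) :
    Okay S (tow S R0 n) ∧ ∀ x s y, tow S R0 n x s y → x.rank ≤ n ∧ y.rank ≤ n := by
  induction n with
  | zero =>
    refine ⟨⟨?_, ?_, ?_⟩, ?_⟩
    · rintro _ s _ ⟨u, v, rfl, rfl, h⟩
      exact ⟨v, u, rfl, rfl, ok.symm _ _ _ h⟩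
    · rintro _ s _ _ ⟨u, v, rfl, rfl, h⟩ ⟨u', v', e, rfl, h'⟩
      cases e
      rw [ok.det _ _ _ _ h h']
    · intro x s y h
      have h' := h
      obtain ⟨w, ⟨u, v, rfl, rfl, _⟩, _⟩ := h'
      rw [tow_zero_pth] at h
      obtain ⟨z, rfl, h⟩ := h
      rw [tow_zero_pth]
      exact ⟨u, rfl, ok.clo _ _ _ h⟩
    · rintro _ s _ ⟨u, v, rfl, rfl, h⟩
      exact ⟨le_rfl, le_rfl⟩
  | succ n ih =>
    obtain ⟨ih1, ih2⟩ := ih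
    refine ⟨Rn_ok ih1 ih2 ?_ ?_, ?_⟩
    · intro x q i; simp [Wt.rank]
    · intro x q i x' q' i' h; cases h; exact ⟨rfl, rfl, rfl⟩
    · intro x s y h
      obtain ⟨h1, h2⟩ := Rn_supp ih2 h
      constructor
      · rcases h1 with h1 | ⟨_, _, _, rfl⟩
        · exact Nat.le_succ_of_le h1
        · exact le_rfl
      · rcases h2 with h1 | ⟨_, _, _, rfl⟩
        · exact Nat.le_succ_of_le h1
        · exact le_rfl

theorem tow_mono {V : Type} {R0 : V → L → V → Prop} {m n : ℕ} (h : m ≤ n) {x s y} :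
    tow S R0 m x s y → tow S R0 n x s y := by
  induction h with
  | refl => exact id
  | step _ ih => exact fun h => .inl (ih h)

variable (S) in
def lim {V : Type} (R0 : V → L → V → Prop) (x : Wt V L) (s : L) (y : Wt V L) : Prop :=
  ∃ n, tow S R0 n x s y

section
variable {V : Type} {R0 : V → L → V → Prop} (ok : Okay S R0)

include ok in
theorem lim_symm (x s y) (h : lim S R0 x s y) : lim S R0 y (S.iv s) x := by
  obtain ⟨n, h⟩ := h
  exact ⟨n, (tow_ok ok n).1.symm _ _ _ h⟩

include ok in
theorem lim_det (x s y z) (h : lim S R0 x s y) (h' : lim S R0 x s z) : y = z := by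
  obtain ⟨n, h⟩ := h
  obtain ⟨m, h'⟩ := h'
  exact (tow_ok ok (max n m)).1.det _ _ _ _ (tow_mono (le_max_left _ _) h)
    (tow_mono (le_max_right _ _) h')

theorem lim_tot (x s) : ∃ y, lim S R0 x s y := by
  obtain ⟨y, h⟩ := Rn_complete (S := S) (R := tow S R0 x.rank) (nw := Wt.nw x.rank)
    (X := {z | z.rank ≤ x.rank}) x (show x.rank ≤ x.rank from le_rfl) s
  exact ⟨y, x.rank + 1, h⟩

theorem lim_pth (k : ℕ) (x s) : ∃ n y, Pth S (tow S R0 n) k x s y := by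
  induction k generalizing x s with
  | zero => exact ⟨0, x, rfl⟩
  | succ k ih =>
    obtain ⟨y, n, h⟩ := lim_tot (S := S) (R0 := R0) x s
    obtain ⟨m, z, h'⟩ := ih y (S.nx s)
    exact ⟨max n m, z, y, tow_mono (le_max_left _ _) h,
      pth_mono (fun _ _ _ => tow_mono (le_max_right _ _)) _ _ _ _ h'⟩

include ok in
theorem lim_clo (x s) : Pth S (lim S R0) (2 * S.M) x s x := by
  obtain ⟨n, y, h⟩ := lim_pth (S := S) (R0 := R0) (S.M + 1) x s
  exact pth_mono (fun _ _ _ h => ⟨n, h⟩) _ _ _ _ ((tow_ok ok n).1.clo _ _ _ h)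

theorem lim_base {u s v} (h : R0 u s v) : lim S R0 (.base u) s (.base v) :=
  ⟨0, u, v, rfl, rfl, h⟩

end
end
/-! ### the concrete letters -/

section Letters
variable {g : ℕ}

def lpos (s : Letter g) : Fin (4 * g) :=
  ⟨4 * ((s.1 : ℕ) / 2) + (s.1 : ℕ) % 2 + (if s.2 then 0 else 2), by
    have := s.1.2
    split <;> omega⟩

def ltr (p : Fin (4 * g)) : Letter g := (relLabel g p, relSign g p)

theorem ltr_lpos (s : Letter g) : ltr (lpos s) = s := by
  obtain ⟨⟨l, hl⟩, b⟩ := s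
  simp only [ltr, lpos, relLabel, relSign]
  cases b
  · simp; omega
  · simp; omega

theorem lpos_ltr (p : Fin (4 * g)) : lpos (ltr p) = p := by
  obtain ⟨p, hp⟩ := p
  simp only [ltr, lpos, relLabel, relSign, Fin.mk.injEq, decide_eq_true_eq]
  split <;> omega

def eL : Fin (4 * g) ≃ Letter g := ⟨ltr, lpos, lpos_ltr, ltr_lpos⟩

def nxL (g : ℕ) : Equiv.Perm (Letter g) := eL.symm.trans ((finRotate (4 * g)).trans eL)

def ivL (s : Letter g) : Letter g := (s.1, !s.2)

theorem lpos_nx (s : Letter g) :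
    ((lpos (nxL g s) : Fin (4 * g)) : ℕ) =
      if (lpos s : ℕ) + 1 = 4 * g then 0 else (lpos s : ℕ) + 1 := by
  have h : lpos (nxL g s) = finRotate (4 * g) (lpos s) := lpos_ltr _
  rw [h]
  generalize lpos s = p
  generalize 4 * g = n at p
  cases n with
  | zero => exact p.elim0
  | succ n =>
    rw [coe_finRotate]
    have : (p = Fin.last n) ↔ ((p : ℕ) + 1 = n + 1) := by
      rw [Fin.ext_iff]; simp
    simp only [this]

theorem lpos_nx_pow (k : ℕ) (s : Letter g) :
    ((lpos ((nxL g ^ k) s) : Fin (4 * g)) : ℕ) = ((lpos s : ℕ) + k) % (4 * g) := by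
  induction k with
  | zero => simp [Nat.mod_eq_of_lt]
  | succ k ih =>
    rw [pow_succ', Equiv.Perm.mul_apply, lpos_nx, ih, ← Nat.add_assoc]
    have hlt : 0 < 4 * g := by have := (lpos s).2; omega
    generalize (lpos s : ℕ) + k = a
    have h2 := Nat.mod_lt a hlt
    rw [← Nat.mod_add_mod a]
    generalize a % (4 * g) = c at *
    split
    · next h => rw [h, Nat.mod_self]
    · rw [Nat.mod_eq_of_lt (by omega)]

theorem nxL_pow (s : Letter g) : (nxL g ^ (4 * g)) s = s := by
  apply eL.symm.injective
  apply Fin.ext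
  show (lpos ((nxL g ^ (4 * g)) s) : ℕ) = lpos s
  rw [lpos_nx_pow]; simp [Nat.mod_eq_of_lt]

theorem lpos_iv (s : Letter g) :
    ((lpos (ivL s) : Fin (4 * g)) : ℕ) =
      if (lpos s : ℕ) % 4 < 2 then (lpos s : ℕ) + 2 else (lpos s : ℕ) - 2 := by
  obtain ⟨⟨l, hl⟩, b⟩ := s
  cases b <;> simp [lpos, ivL] <;> omega

theorem lpos_sg (s : Letter g) :
    (((lpos s : ℕ) % 4 < 2 ∧ ((lpos (nxL g (ivL s)) : Fin (4 * g)) : ℕ) = lpos s + 3 ∧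
        (lpos s : ℕ) + 3 ≠ 4 * g) ∨
     ((lpos s : ℕ) % 4 < 2 ∧ ((lpos (nxL g (ivL s)) : Fin (4 * g)) : ℕ) = 0 ∧
        (lpos s : ℕ) + 3 = 4 * g) ∨
     (2 ≤ (lpos s : ℕ) % 4 ∧ ((lpos (nxL g (ivL s)) : Fin (4 * g)) : ℕ) + 1 = lpos s)) := by
  rw [lpos_nx, lpos_iv]
  have := (lpos s).2
  split <;> split <;> omega

theorem posLv_eq (s : Letter g) :
    ((lpos s : ℕ) % 4 = 0 ∨ (lpos s : ℕ) % 4 = 2) ∧ posLv s = lpos s ∨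
    (lpos s : ℕ) % 4 = 1 ∧ posLv s = lpos s + 2 ∨
    (lpos s : ℕ) % 4 = 3 ∧ posLv s + 2 = lpos s := by
  obtain ⟨⟨l, hl⟩, b⟩ := s
  have e : l = 2 * (l / 2) ∨ l = 2 * (l / 2) + 1 := by omega
  generalize l / 2 = i at e
  rcases e with rfl | rfl <;> cases b <;> simp [posLv, posOut, posIn, lpos] <;> omega

theorem posArr_eq (s : Letter g) : posArr s = posLv (ivL s) := by
  obtain ⟨l, b⟩ := s
  cases b <;> rfl

theorem gap_nx (s : Letter g) : gapN s (nxL g s) = 0 := by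
  have h := lpos_nx s
  have h2 := lpos_iv s
  have h3 := posLv_eq (nxL g s)
  have h4 := posLv_eq (ivL s)
  have h5 := (lpos s).2
  rw [gapN, posArr_eq]
  have : posLv (nxL g s) + 4 * g - (posLv (ivL s) + 1) = 0 ∨
      posLv (nxL g s) + 4 * g - (posLv (ivL s) + 1) = 4 * g := by
    split_ifs at h h2 <;> omega
  rcases this with h | h <;> rw [h] <;> simp

def sysL (g : ℕ) (hg : 2 ≤ g) : Sys (Letter g) where
  nx := nxL g
  iv := ivL
  M := 2 * g
  iviv := by rintro ⟨l, b⟩; simp [ivL]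
  hM := by omega
  nxN := by
    ext1 s
    rw [← Nat.mul_assoc]; exact nxL_pow s
  s1 := by
    intro s h
    have h1 := lpos_sg s
    rw [h] at h1
    omega
  s2 := by
    intro s h
    have h1 := lpos_sg s
    have h2 := lpos_sg (nxL g (ivL s))
    rw [h] at h2
    omega
  s3 := by
    intro s h
    have h1 := lpos_sg s
    have h2 := lpos_sg (nxL g (ivL s))
    have h3 := lpos_sg (nxL g (ivL (nxL g (ivL s))))
    rw [h] at h3
    omega

/-- block word -/
def bw (g : ℕ) : ℕ → Letter g → List (Letter g)
  | 0, _ => []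
  | k + 1, s => s :: bw g k (nxL g s)

theorem bw_length (k : ℕ) (s : Letter g) : (bw g k s).length = k := by
  induction k generalizing s with
  | zero => rfl
  | succ k ih => simp [bw, ih]

theorem bw_get (k : ℕ) (s : Letter g) (i : ℕ) (h : i < (bw g k s).length) :
    (bw g k s)[i] = (nxL g ^ i) s := by
  induction k generalizing s i with
  | zero => simp [bw] at h
  | succ k ih =>
    cases i with
    | zero => simp [bw]
    | succ i => simp [bw, ih, pow_succ]

theorem relatorWord_eq (hg : 2 ≤ g) : relatorWord g = bw g (4 * g) (ltr ⟨0, by omega⟩) := by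
  apply List.ext_getElem
  · simp [relatorWord, bw_length]
  · intro i h1 h2
    rw [bw_get]
    have hi : i < 4 * g := by simpa [relatorWord] using h1
    apply eL.symm.injective
    apply Fin.ext
    show (lpos _ : ℕ) = lpos _
    rw [lpos_nx_pow, lpos_ltr]
    simp only [relatorWord, List.getElem_map, List.getElem_finRange]
    show (lpos (ltr _) : ℕ) = _
    rw [lpos_ltr]
    simp [Nat.mod_eq_of_lt hi]

end Letters

/-! ### from complexes to partial actions and back -/

section Final
variable {g : ℕ}

/-- the labeled adjacency relation of a complex -/
def Rl (Y : Complex g) (u : Y.V) (s : Letter g) (v : Y.V) : Prop :=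
  ∃ d : Y.D, Y.dTail d = u ∧ Y.dHead d = v ∧ Y.dLet d = s

theorem Rl_symm (Y : Complex g) (u : Y.V) (s : Letter g) (v : Y.V) (h : Rl Y u s v) :
    Rl Y v (ivL s) u := by
  obtain ⟨⟨e, b⟩, rfl, rfl, rfl⟩ := h
  refine ⟨(e, !b), ?_, ?_, rfl⟩ <;> cases b <;> rfl

theorem Rl_det (Y : Complex g) (h1 : Y.P1) (u : Y.V) (s : Letter g) (v w : Y.V)
    (h : Rl Y u s v) (h' : Rl Y u s w) : v = w := by
  obtain ⟨⟨e, b⟩, rfl, rfl, rfl⟩ := h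
  obtain ⟨⟨e', b'⟩, h2, rfl, h3⟩ := h'
  simp only [Complex.dLet, Prod.mk.injEq] at h3
  obtain ⟨h3, rfl⟩ := h3
  cases b'
  · obtain rfl := h1.2 e' e h2 h3
    rfl
  · obtain rfl := h1.1 e' e h2 h3
    rfl

theorem walk_pth (hg : 2 ≤ g) (Y : Complex g) {u v : Y.V} {l : List Y.D} (h : Y.WalkFrom u v l)
    (k : ℕ) (s : Letter g) (hw : Y.wordOf l = bw g k s) :
    Pth (sysL g hg) (Rl Y) k u s v := by
  induction h generalizing k s with
  | nil v =>
    cases k with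
    | zero => rfl
    | succ k => simp [Complex.wordOf, bw] at hw
  | cons d h ih =>
    cases k with
    | zero => simp [Complex.wordOf, bw] at hw
    | succ k =>
      simp only [Complex.wordOf, bw, List.map_cons, List.cons.injEq] at hw
      exact ⟨Y.dHead d, ⟨d, rfl, rfl, hw.1⟩, ih k _ hw.2⟩

theorem pth_walk (hg : 2 ≤ g) (Y : Complex g) {u v : Y.V} (k : ℕ) (s : Letter g)
    (h : Pth (sysL g hg) (Rl Y) k u s v) :
    ∃ l, Y.WalkFrom u v l ∧ Y.wordOf l = bw g k s := by
  induction k generalizing u s with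
  | zero => obtain rfl := h; exact ⟨[], .nil _, rfl⟩
  | succ k ih =>
    obtain ⟨w, ⟨d, rfl, rfl, rfl⟩, h2⟩ := h
    obtain ⟨l, h3, h4⟩ := ih _ h2
    refine ⟨d :: l, .cons d h3, ?_⟩
    simp only [Complex.wordOf, bw, List.map_cons, List.cons.injEq, true_and]
    exact h4

theorem walk_chain (Y : Complex g) (r : Y.D → Y.D → Prop) {u v : Y.V} {l : List Y.D}
    (h : Y.WalkFrom u v l) (k : ℕ) (s : Letter g) (hw : Y.wordOf l = bw g k s)
    (hr : ∀ d ∈ l, ∀ d', Y.adj d d' → gapN (Y.dLet d) (Y.dLet d') = 0 → r d d') :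
    List.IsChain r l := by
  induction h generalizing k s with
  | nil v => exact .nil
  | cons d h ih =>
    cases k with
    | zero => simp [Complex.wordOf, bw] at hw
    | succ k =>
      simp only [Complex.wordOf, bw, List.map_cons, List.cons.injEq] at hw
      have hc := ih k _ hw.2 (fun d hd => hr d (List.mem_cons_of_mem _ hd))
      obtain ⟨hw1, hw2⟩ := hw
      generalize hu : Y.dHead d = u at h
      cases h with
      | nil => exact .singleton _
      | cons d' h' =>
        cases k with
        | zero => simp [bw] at hw2
        | succ k =>
          simp only [bw, List.map_cons, List.cons.injEq] at hw2
          refine .cons_cons (hr d (by simp) d' hu ?_) hc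
          rw [hw2.1, hw1]; exact gap_nx s

theorem walk_good_of (hg : 2 ≤ g) (Y : Complex g) (h1 : Y.P1) {u v : Y.V} {l : List Y.D}
    (h : Y.WalkFrom u v l) (k : ℕ) (s : Letter g) (hw : Y.wordOf l = bw g k s) (d : Y.D)
    (hd : d ∈ l)
    (hG : Pth (sysL g hg) (Rl Y) (2 * (sysL g hg).M) (Y.dTail d) (Y.dLet d) (Y.dTail d)) :
    Pth (sysL g hg) (Rl Y) (2 * (sysL g hg).M) u s u := by
  induction h generalizing k s with
  | nil v => simp at hd
  | cons d' h ih =>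
    cases k with
    | zero => simp [Complex.wordOf, bw] at hw
    | succ k =>
      simp only [Complex.wordOf, bw, List.map_cons, List.cons.injEq] at hw
      rcases List.mem_cons.1 hd with rfl | hd
      · rw [← hw.1]; exact hG
      · exact good_bwd (S := sysL g hg) (Rl_symm Y) (Rl_det Y h1) ⟨d', rfl, rfl, hw.1⟩
          (ih k _ hw.2 hd)

theorem walk_good_to (hg : 2 ≤ g) (Y : Complex g) (h1 : Y.P1) {u v : Y.V} {l : List Y.D}
    (h : Y.WalkFrom u v l) (k : ℕ) (s : Letter g) (hw : Y.wordOf l = bw g k s) (d : Y.D)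
    (hd : d ∈ l) (hG : Pth (sysL g hg) (Rl Y) (2 * (sysL g hg).M) u s u) :
    Pth (sysL g hg) (Rl Y) (2 * (sysL g hg).M) (Y.dTail d) (Y.dLet d) (Y.dTail d) := by
  induction h generalizing k s with
  | nil v => simp at hd
  | cons d' h ih =>
    cases k with
    | zero => simp [Complex.wordOf, bw] at hw
    | succ k =>
      simp only [Complex.wordOf, bw, List.map_cons, List.cons.injEq] at hw
      rcases List.mem_cons.1 hd with rfl | hd
      · rw [hw.1]; exact hG
      · exact ih k _ hw.2 hd
          (good_fwd (S := sysL g hg) (Rl_det Y h1) ⟨d', rfl, rfl, hw.1⟩ hG)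

theorem twoM (hg : 2 ≤ g) : 2 * (sysL g hg).M = 4 * g := by
  show 2 * (2 * g) = 4 * g
  omega

theorem Y_okay (hg : 2 ≤ g) (Y : Complex g) (h1 : Y.P1) (h3 : Y.P3)
    (hbr : Y.BoundaryReduced Set.univ Set.univ) : Okay (sysL g hg) (Rl Y) where
  symm := Rl_symm Y
  det := Rl_det Y h1
  clo := by
    intro x s y h
    obtain ⟨l, hl, hw⟩ := pth_walk hg Y _ s h
    have hlen : l.length = 2 * g + 1 := by
      have := congrArg List.length hw
      rw [bw_length] at this
      have e : (sysL g hg).M = 2 * g := rfl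
      rw [e] at this
      simpa [Complex.wordOf] using this
    have hne : l ≠ [] := by rintro rfl; simp at hlen
    by_cases hf : ∃ d ∈ l, ∃ f, d ∈ Y.bdry f
    · obtain ⟨d, hd, f, hdf⟩ := hf
      obtain ⟨⟨v, hv⟩, hwf⟩ := h3.1 f
      obtain ⟨s0, hs0⟩ : ∃ s0, relatorWord g = bw g (4 * g) s0 := ⟨_, relatorWord_eq hg⟩
      rw [hs0] at hwf
      have hG := walk_pth hg Y hv _ _ hwf
      rw [← twoM hg] at hG
      exact walk_good_of hg Y h1 hl _ _ hw d hd (walk_good_to hg Y h1 hv _ _ hwf d hdf hG)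
    · exfalso
      push Not at hf
      refine hbr.1 l ⟨hne, fun _ _ => Set.mem_univ _, ?_⟩ ⟨⟨hne, by omega, ?_⟩, hlen.ge⟩
      · refine walk_chain Y _ hl _ _ hw ?_
        intro d hd d' ha hgap
        refine ⟨Set.mem_univ _, ⟨Set.mem_univ _, ha, ?_⟩, ?_⟩
        · intro d'' _ _; rw [hgap]; exact Nat.zero_le _
        · rintro ⟨f, _, hin⟩
          have : d ∈ Y.bdry f ++ Y.bdry f := hin.subset (by simp)
          exact hf d hd f (by simpa using this)
      · exact walk_chain Y _ hl _ _ hw (fun d _ d' ha hgap => ⟨ha, hgap⟩)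

/-- the 1-skeleton of the covering -/
def Zsk {W : Type} (T : W → Letter g → W → Prop) : Complex g where
  V := W
  E := {e : W × Fin (2 * g) × W // T e.1 (e.2.1, true) e.2.2}
  F := Empty
  src e := e.1.1
  dst e := e.1.2.2
  lab e := e.1.2.1
  bdry f := f.elim

def Zc {W : Type} (T : W → Letter g → W → Prop) : Complex g where
  V := W
  E := {e : W × Fin (2 * g) × W // T e.1 (e.2.1, true) e.2.2}
  F := {l : List (Zsk T).D // (∃ v, (Zsk T).WalkFrom v v l) ∧ (Zsk T).wordOf l = relatorWord g}
  src e := e.1.1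
  dst e := e.1.2.2
  lab e := e.1.2.1
  bdry f := f.1

theorem walk_to_c {W : Type} (T : W → Letter g → W → Prop) {u v : (Zsk T).V} {l : List (Zsk T).D}
    (h : (Zsk T).WalkFrom u v l) : (Zc T).WalkFrom u v l := by
  induction h with
  | nil v => exact Complex.WalkFrom.nil (Y := Zc T) v
  | cons d h ih => exact Complex.WalkFrom.cons (Y := Zc T) d ih

theorem walk_of_c {W : Type} (T : W → Letter g → W → Prop) {u v : (Zc T).V} {l : List (Zc T).D}
    (h : (Zc T).WalkFrom u v l) : (Zsk T).WalkFrom u v l := by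
  induction h with
  | nil v => exact Complex.WalkFrom.nil (Y := Zsk T) v
  | cons d h ih => exact Complex.WalkFrom.cons (Y := Zsk T) d ih

section
variable {W : Type} {T : W → Letter g → W → Prop}
  (hs : ∀ x s y, T x s y → T y (ivL s) x) (hd : ∀ x s y z, T x s y → T x s z → y = z)
  (ht : ∀ x s, ∃ y, T x s y)

include hs in
theorem Rl_Z (u : W) (s : Letter g) (v : W) (h : Rl (Zc T) u s v) : T u s v := by
  obtain ⟨⟨⟨⟨x, l, y⟩, h⟩, b⟩, rfl, rfl, rfl⟩ := h
  cases b
  · exact hs _ _ _ h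
  · exact h

include hs hd in
theorem Z_P1 : (Zc T).P1 := by
  constructor
  · rintro ⟨⟨x, l, y⟩, h⟩ ⟨⟨x', l', y'⟩, h'⟩ h1 h2
    obtain rfl : x = x' := h1
    obtain rfl : l = l' := h2
    obtain rfl := hd _ _ _ _ h h'
    rfl
  · rintro ⟨⟨x, l, y⟩, h⟩ ⟨⟨x', l', y'⟩, h'⟩ h1 h2
    obtain rfl : y = y' := h1
    obtain rfl : l = l' := h2
    obtain rfl := hd _ _ _ _ (hs _ _ _ h) (hs _ _ _ h')
    rfl

include hs hd in
theorem Z_rel (hg : 2 ≤ g) (hc : ∀ x s, Pth (sysL g hg) T (2 * (sysL g hg).M) x s x)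
    (u v : W) (l : List (Zc T).D)
    (h : (Zc T).WalkFrom u v l) (hw : (Zc T).wordOf l = relatorWord g) : u = v := by
  rw [relatorWord_eq hg] at hw
  have h1 := pth_mono (S := sysL g hg) (Rl_Z hs) _ _ _ _ (walk_pth hg (Zc T) h _ _ hw)
  have h2 := hc u (ltr ⟨0, by omega⟩)
  rw [twoM] at h2
  exact pth_det (S := sysL g hg) hd h2 h1

include hs hd ht in
theorem Z_cov (hg : 2 ≤ g) (hc : ∀ x s, Pth (sysL g hg) T (2 * (sysL g hg).M) x s x) :
    (Zc T).IsCovering := by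
  refine ⟨Z_P1 hs hd, ⟨?_, ?_⟩, ?_, ?_, Z_rel hs hd hg hc, ?_⟩
  · rintro ⟨l, ⟨v, hv⟩, hw⟩
    exact ⟨⟨v, walk_to_c T hv⟩, hw⟩
  · exact Subtype.val_injective
  · intro v l
    obtain ⟨y, hy⟩ := ht v (l, true)
    exact ⟨⟨(v, l, y), hy⟩, rfl, rfl⟩
  · intro v l
    obtain ⟨y, hy⟩ := ht v (l, false)
    exact ⟨⟨(y, l, v), hs _ _ _ hy⟩, rfl, rfl⟩
  · intro v l h hw
    exact ⟨⟨l, ⟨v, walk_of_c T h⟩, hw⟩, rfl⟩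

end

/-! ### the group action -/

theorem perm_exists {W : Type} {T : W → Letter g → W → Prop}
    (hs : ∀ x s y, T x s y → T y (ivL s) x) (hd : ∀ x s y z, T x s y → T x s z → y = z)
    (ht : ∀ x s, ∃ y, T x s y) (l : Fin (2 * g)) :
    ∃ π : Equiv.Perm W, ∀ u v, T u (l, true) v → π v = u := by
  choose f hf using fun x => ht x (l, true)
  choose b hb using fun x => ht x (l, false)
  refine ⟨⟨b, f, ?_, ?_⟩, ?_⟩
  · intro x; exact hd _ _ _ _ (hf _) (hs _ _ _ (hb x))
  · intro x; exact hd _ _ _ _ (hb _) (hs _ _ _ (hf x))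
  · intro u v h; exact hd _ _ _ _ (hb _) (hs _ _ _ h)

def wact {W : Type} (π : Fin (2 * g) → Equiv.Perm W) (w : List (Letter g)) : Equiv.Perm W :=
  (w.map fun l => if l.2 then π l.1 else (π l.1)⁻¹).prod

theorem wact_walk {W : Type} {T : W → Letter g → W → Prop}
    (hs : ∀ x s y, T x s y → T y (ivL s) x) (π : Fin (2 * g) → Equiv.Perm W)
    (hπ : ∀ l u v, T u (l, true) v → π l v = u) (Y : Complex g) (m : Y.V → W)
    (hm : ∀ u s v, Rl Y u s v → T (m u) s (m v)) {u v : Y.V} {l : List Y.D}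
    (h : Y.WalkFrom u v l) : wact π (Y.wordOf l) (m v) = m u := by
  induction h with
  | nil v => rfl
  | @cons d v' l' h ih =>
    have e : wact π (Y.wordOf (d :: l')) = (if (Y.dLet d).2 then π (Y.dLet d).1
      else (π (Y.dLet d).1)⁻¹) * wact π (Y.wordOf l') := by
      simp only [wact, Complex.wordOf, List.map_cons, List.prod_cons]
    rw [e, Equiv.Perm.mul_apply, ih]
    have hT := hm _ _ _ ⟨d, rfl, rfl, rfl⟩
    generalize Y.dLet d = s at hT
    obtain ⟨l, b⟩ := s
    cases b
    · have := hπ _ _ _ (hs _ _ _ hT)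
      simp only [Bool.false_eq_true, if_false]
      rw [Equiv.Perm.inv_eq_iff_eq]; exact this.symm
    · exact hπ _ _ _ hT

theorem bw_walk_exists {W : Type} {T : W → Letter g → W → Prop}
    (hs : ∀ x s y, T x s y → T y (ivL s) x)
    (ht : ∀ x s, ∃ y, T x s y) (w : List (Letter g)) (u : W) :
    ∃ v l, (Zc T).WalkFrom u v l ∧ (Zc T).wordOf l = w := by
  induction w generalizing u with
  | nil => exact ⟨u, [], Complex.WalkFrom.nil (Y := Zc T) u, rfl⟩
  | cons s w ih =>
    obtain ⟨y, hy⟩ := ht u s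
    obtain ⟨v, l, hl, hw⟩ := ih y
    obtain ⟨a, b⟩ := s
    cases b
    · refine ⟨v, (⟨(y, a, u), hs _ _ _ hy⟩, false) :: l,
        Complex.WalkFrom.cons (Y := Zc T) (⟨(y, a, u), hs _ _ _ hy⟩, false) hl, ?_⟩
      rw [← hw]; rfl
    · refine ⟨v, (⟨(u, a, y), hy⟩, true) :: l,
        Complex.WalkFrom.cons (Y := Zc T) (⟨(u, a, y), hy⟩, true) hl, ?_⟩
      rw [← hw]; rfl

theorem wact_eq_one {W : Type} (π : Fin (2 * g) → Equiv.Perm W)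
    (hrel : wact π (relatorWord g) = 1) (w : List (Letter g)) (hw : wordG w = 1) :
    wact π w = 1 := by
  have hr : ∀ r ∈ ({relatorF g} : Set (FreeGroup (Fin (2 * g)))), FreeGroup.lift π r = 1 := by
    rintro r rfl
    rw [← hrel, relatorF, map_list_prod, List.map_map, wact]
    congr 2
    funext l
    simp only [Function.comp]
    split <;> simp
  have h := congrArg (PresentedGroup.toGroup hr) hw
  rw [map_one, wordG, map_list_prod, List.map_map] at h
  rw [← h, wact]
  congr 2
  funext l
  simp only [Function.comp, letterG]
  split <;> simp

theorem map_walk (Y Z : Complex g) (mV : Y.V → Z.V) (mE : Y.E → Z.E)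
    (hsrc : ∀ e, Z.src (mE e) = mV (Y.src e)) (hdst : ∀ e, Z.dst (mE e) = mV (Y.dst e))
    {u v : Y.V} {l : List Y.D} (h : Y.WalkFrom u v l) :
    Z.WalkFrom (mV u) (mV v) (l.map fun d => (mE d.1, d.2)) := by
  induction h with
  | nil v => exact .nil _
  | cons d h ih =>
    obtain ⟨e, b⟩ := d
    have h1 : Z.dTail (mE e, b) = mV (Y.dTail (e, b)) := by cases b <;> simp [Complex.dTail, *]
    have h2 : Z.dHead (mE e, b) = mV (Y.dHead (e, b)) := by cases b <;> simp [Complex.dHead, *]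
    rw [List.map_cons, ← h1]
    refine .cons _ ?_
    rw [h2]; exact ih

theorem final (hg : 2 ≤ g) (Y : Complex g) (h1 : Y.P1) (h3 : Y.P3)
    (hbr : Y.BoundaryReduced Set.univ Set.univ) : Y.P2 ∧ Y.IsTiledSurface := by
  have ok := Y_okay hg Y h1 h3 hbr
  have hs : ∀ x s y, lim (sysL g hg) (Rl Y) x s y → lim (sysL g hg) (Rl Y) y (ivL s) x :=
    lim_symm ok
  have hd := lim_det ok
  have ht := lim_tot (S := sysL g hg) (R0 := Rl Y)
  have hc := lim_clo ok
  have hm : ∀ u s v, Rl Y u s v → lim (sysL g hg) (Rl Y) (.base u) s (.base v) :=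
    fun u s v => lim_base
  generalize hT : lim (sysL g hg) (Rl Y) = T at *
  have hbase : Function.Injective (Wt.base : Y.V → Wt Y.V (Letter g)) := by
    intro a b h; cases h; rfl
  constructor
  · intro u v l hl hw
    choose π hπ using perm_exists hs hd ht
    have hrel : wact π (relatorWord g) = 1 := by
      ext1 x
      obtain ⟨y, hy⟩ : ∃ y, wact π (relatorWord g) y = x :=
        (wact π (relatorWord g)).surjective x
      obtain ⟨v, l, hl, hw⟩ := bw_walk_exists hs ht (relatorWord g) x
      have e := Z_rel hs hd hg hc _ _ _ hl hw
      have := wact_walk hs π hπ (Zc T) id (Rl_Z hs) hl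
      rw [hw] at this
      subst e
      exact this
    have h := wact_walk hs π hπ Y _ hm hl
    rw [wact_eq_one π hrel _ hw] at h
    exact (hbase h).symm
  · let mE : Y.E → (Zc T).E := fun e =>
      ⟨(.base (Y.src e), Y.lab e, .base (Y.dst e)), hm _ _ _ ⟨(e, true), rfl, rfl, rfl⟩⟩
    have hmE : Function.Injective mE := by
      intro e e' h
      have h' := congrArg Subtype.val h
      simp only [mE, Prod.mk.injEq] at h'
      exact h1.1 _ _ (hbase h'.1) h'.2.1
    refine ⟨Zc T, Z_cov hs hd ht hg hc, ⟨Wt.base, mE, fun f =>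
      ⟨(Y.bdry f).map fun d => (mE d.1, d.2), ?_, ?_⟩, fun _ => rfl, fun _ => rfl, fun _ => rfl,
      fun _ => rfl⟩, hbase, hmE, ?_⟩
    · obtain ⟨⟨v, hv⟩, _⟩ := h3.1 f
      exact ⟨.base v, walk_of_c T (map_walk Y (Zc T) Wt.base mE (fun _ => rfl) (fun _ => rfl) hv)⟩
    · rw [← (h3.1 f).2]
      simp only [Complex.wordOf, List.map_map]
      rfl
    · intro f f' h
      apply h3.2
      have h' := congrArg Subtype.val h
      refine List.map_injective_iff.2 ?_ h'
      rintro ⟨e, b⟩ ⟨e', b'⟩ h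
      obtain ⟨ha, hb⟩ := Prod.ext_iff.1 h
      have hb' : b = b' := hb
      have ha' : e = e' := hmE ha
      rw [ha', hb']

end Final

/-- If a complex `Y` with directed labeled edges satisfies
**P1** and **P3**, and its (combinatorially defined) thick version is boundary
reduced, then `Y` also satisfies **P2** and hence is a tiled surface. -/
theorem statement_2 (g : ℕ) (hg : 2 ≤ g) (Y : Complex g) (h1 : Y.P1) (h3 : Y.P3)
    (hbr : Y.BoundaryReduced Set.univ Set.univ) :
    Y.P2 ∧ Y.IsTiledSurface := by
  exact final hg Y h1 h3 hbr

end CS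

end
end
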